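/- For every ν ∈ ℂ with ν ≠ −1/2, ∫_{−1}^1 x [P_ν(x)]³ P_ν(−x) dx = sin(2νπ) cos(νπ) / ((2ν+1)² π). -/

import Mathlib

open Real MeasureTheory intervalIntegral Filter Topology

/-- Legendre function of the first kind of complex degree `ν`, defined on `(-1, 1]`
via the Mehler–Dirichlet integral. -/
noncomputable def legendreP (ν : ℂ) (x : ℝ) : ℂ :=
  if x = 1 then 1
  else ((2 / π : ℝ) : ℂ) *
    ∫ β in (0:ℝ)..(Real.arccos x),
      Complex.cos ((2*ν + 1) * (β:ℂ) / 2) / ((Real.sqrt (2 * (Real.cos β - x)) : ℝ) : ℂ)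

/-!
For `-1 < Re ν` the Euler integral `u_ν(z) = ∫₀¹ t^ν (1 - t)^(-1/2) (1 - zt)^(-1/2) dt` is
holomorphic on the unit disk and `O(|1 - z|^(-1/4))` near its boundary. Put
`R_ν(θ) = e^(i(ν+1)θ) u_ν(e^(2iθ))`. Cauchy's theorem on a half-strip turns the Mehler–Dirichlet
integral into `iπ P_ν(cos θ) = R_ν(θ) - R_ν(-θ)`, and combining this with its analogue at `π - θ`
gives `π (e^(iνπ) P_ν(x) - P_ν(-x)) = 2 sin(νπ) R_ν(θ)` for `x = cos θ`.

Write `P = P_ν(x)`, `Q = P_ν(-x)`, `s = sin(νπ)`. Since `P_{-ν-1} = P_ν`, multiplying the relations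
for `ν` and `-ν - 1`, where `-1 < Re ν < 0`, yields
`π² (P² - Q² + 2isPQ) = -4s² e^(iθ) H(e^(2iθ))` with `H = u_ν u_{-ν-1}`. Squaring and integrating
against `x dx = -sin θ cos θ dθ` leads to the mean of `(z² - 1) H(z)²` over the unit circle, which
is `-H(0)²`; a product of Beta values, `H(0)` is elementary. On the other side, the reflection
`x ↦ -x` leaves only `8is ∫ x P³ Q dx`. Both sides of the resulting identity are entire in `ν`.
-/

open Complex (I)

theorem aestronglyMeasurable_deriv_of_forall_mem_nhds {α E : Type*} [MeasurableSpace α]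
    {μ : Measure α} [NormedAddCommGroup E] [NormedSpace ℂ E] {F : ℂ → α → E} {c : ℂ} {s : Set ℂ}
    (hs : s ∈ 𝓝 c) (hF_meas : ∀ z ∈ s, AEStronglyMeasurable (F z) μ)
    (hF_diff : ∀ᵐ a ∂μ, DifferentiableAt ℂ (F · a) c) :
    AEStronglyMeasurable (fun a => deriv (F · a) c) μ := by
  have hs' : ∀ᶠ z in 𝓝[≠] c, z ∈ s := mem_nhdsWithin_of_mem_nhds hs
  obtain ⟨u, hu_tendsto, hu_mem⟩ := exists_seq_forall_of_frequently hs'.frequently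
  refine aestronglyMeasurable_of_tendsto_ae (u := atTop)
    (f := fun n a => slope (F · a) c (u n)) ?_ ?_
  · intro n
    simp only [slope_def_module]
    exact ((hF_meas _ (hu_mem n)).sub (hF_meas c (mem_of_mem_nhds hs))).const_smul _
  · filter_upwards [hF_diff] with a ha
    exact (hasDerivAt_iff_tendsto_slope.1 ha.hasDerivAt).comp hu_tendsto

theorem differentiableAt_integral_of_dominated {α E : Type*} [MeasurableSpace α]
    {μ : Measure α} [NormedAddCommGroup E] [NormedSpace ℂ E] [CompleteSpace E]
    {F : ℂ → α → E} {c : ℂ} {s : Set ℂ} {bound : α → ℝ}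
    (hs : s ∈ 𝓝 c) (hF_meas : ∀ z ∈ s, AEStronglyMeasurable (F z) μ)
    (hF_diff : ∀ᵐ a ∂μ, DifferentiableOn ℂ (F · a) s)
    (hF_bound : ∀ᵐ a ∂μ, ∀ z ∈ s, ‖F z a‖ ≤ bound a) (hbound : Integrable bound μ) :
    DifferentiableAt ℂ (fun z => ∫ a, F z a ∂μ) c := by
  obtain ⟨r, hr, hrs⟩ := Metric.mem_nhds_iff.1 hs
  have hc : c ∈ s := mem_of_mem_nhds hs
  have hsub : ∀ z ∈ Metric.ball c (r / 2), Metric.closedBall z (r / 4) ⊆ Metric.ball c r := by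
    intro z hz
    refine Metric.closedBall_subset_ball' ?_
    linarith [Metric.mem_ball.1 hz]
  have hderiv : ∀ᵐ a ∂μ, ∀ z ∈ Metric.ball c r,
      HasDerivAt (F · a) (deriv (F · a) z) z := by
    filter_upwards [hF_diff] with a ha z hz
    exact (ha.differentiableAt (mem_of_superset (Metric.isOpen_ball.mem_nhds hz) hrs)).hasDerivAt
  refine (hasDerivAt_integral_of_dominated_loc_of_deriv_le (s := Metric.ball c (r / 2))
    (bound := fun a => bound a / (r / 4)) (F' := fun z a => deriv (F · a) z)
    (Metric.ball_mem_nhds c (half_pos hr)) (mem_of_superset hs hF_meas) ?_ ?_ ?_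
    (hbound.div_const _) ?_).2.differentiableAt
  · exact hbound.mono' (hF_meas c hc) (hF_bound.mono fun a ha => ha c hc)
  · refine aestronglyMeasurable_deriv_of_forall_mem_nhds hs hF_meas ?_
    filter_upwards [hF_diff] with a ha using ha.differentiableAt hs
  · filter_upwards [hF_bound, hF_diff] with a ha ha_diff z hz
    refine Complex.norm_deriv_le_of_forall_mem_sphere_norm_le (by linarith) ?_ fun w hw =>
      ha w (hrs (hsub z hz (Metric.sphere_subset_closedBall hw)))
    exact (ha_diff.mono (Metric.closure_ball_subset_closedBall.trans
      ((hsub z hz).trans hrs))).diffContOnCl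
  · filter_upwards [hderiv] with a ha z hz
    exact ha z (Metric.ball_subset_ball (by linarith) hz)

theorem circleAverage_eq_of_bounded_of_continuousWithinAt_off_countable {E : Type*}
    [NormedAddCommGroup E] [NormedSpace ℂ E] [CompleteSpace E] {F : ℂ → E} {c : ℂ} {R C : ℝ}
    {s : Set ℂ} (hR : 0 < R) (hs : s.Countable) (hF_diff : DifferentiableOn ℂ F (Metric.ball c R))
    (hF_cont : ∀ z ∈ Metric.sphere c R \ s, ContinuousWithinAt F (Metric.ball c R) z)
    (hF_bound : ∀ z ∈ Metric.ball c R, ‖F z‖ ≤ C) : circleAverage F c R = F c := by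
  have hmem {r : ℝ} (hr : r ∈ Set.Ioo 0 R) (φ : ℝ) : circleMap c r φ ∈ Metric.ball c R := by
    simpa [mem_ball_iff_norm, circleMap, abs_of_pos hr.1] using hr.2
  have hr : ∀ᶠ r in 𝓝[<] R, r ∈ Set.Ioo 0 R := Ioo_mem_nhdsLT hR
  refine tendsto_nhds_unique (f := fun r => circleAverage F c r) (l := 𝓝[<] R) ?_ ?_
  · refine Tendsto.const_smul (intervalIntegral.tendsto_integral_filter_of_dominated_convergence
      (fun _ => C) ?_ ?_ intervalIntegrable_const ?_) _
    · filter_upwards [hr] with r hr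
      exact (hF_diff.continuousOn.comp_continuous (continuous_circleMap c r)
        (hmem hr)).aestronglyMeasurable
    · filter_upwards [hr] with r hr
      exact Eventually.of_forall fun φ _ => hF_bound _ (hmem hr φ)
    · have hae : ∀ᵐ φ : ℝ, circleMap c R φ ∉ s :=
        (hs.preimage_circleMap c hR.ne').ae_notMem volume
      filter_upwards [hae] with φ hφ _
      refine (hF_cont _ ⟨circleMap_mem_sphere c hR.le φ, hφ⟩).tendsto.comp ?_
      have hradial : Continuous fun r : ℝ => circleMap c r φ := by unfold circleMap; fun_prop
      exact tendsto_nhdsWithin_iff.2 ⟨hradial.continuousWithinAt, hr.mono fun r hr => hmem hr φ⟩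
  · refine tendsto_const_nhds.congr' ?_
    filter_upwards [hr] with r hr
    refine (DiffContOnCl.circleAverage (hF_diff.mono ?_).diffContOnCl).symm
    rw [abs_of_pos hr.1]
    exact Metric.closure_ball_subset_closedBall.trans (Metric.closedBall_subset_ball hr.2)

theorem integral_neg_one_one_eq_integral_sin_smul_comp_cos {E : Type*} [NormedAddCommGroup E]
    [NormedSpace ℝ E] (g : ℝ → E) :
    ∫ x in (-1 : ℝ)..1, g x = ∫ θ in (0 : ℝ)..π, Real.sin θ • g (Real.cos θ) := by
  have himage : Real.cos '' Set.Ioo 0 π = Set.Ioo (-1) 1 :=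
    Real.cosPartialHomeomorph.image_source_eq_target
  rw [intervalIntegral.integral_of_le (by norm_num), intervalIntegral.integral_of_le Real.pi_pos.le,
    integral_Ioc_eq_integral_Ioo, integral_Ioc_eq_integral_Ioo, ← himage,
    integral_image_eq_integral_abs_deriv_smul measurableSet_Ioo
      (fun θ _ => (Real.hasDerivAt_cos θ).hasDerivWithinAt)
      (Real.injOn_cos.mono Set.Ioo_subset_Icc_self)]
  refine setIntegral_congr_fun measurableSet_Ioo fun θ hθ => ?_
  rw [abs_neg, abs_of_pos (Real.sin_pos_of_mem_Ioo hθ)]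

theorem image_exp_Iio_zero : Real.exp '' Set.Iio 0 = Set.Ioo 0 1 := by
  rw [Real.image_exp_Iio, Real.exp_zero]

theorem integral_Ioo_zero_one_eq_integral_exp_smul_comp_exp {E : Type*} [NormedAddCommGroup E]
    [NormedSpace ℝ E] (g : ℝ → E) :
    ∫ t in Set.Ioo (0 : ℝ) 1, g t = ∫ x in Set.Iio (0 : ℝ), Real.exp x • g (Real.exp x) := by
  rw [← image_exp_Iio_zero, integral_image_eq_integral_abs_deriv_smul measurableSet_Iio
    (fun x _ => (Real.hasDerivAt_exp x).hasDerivWithinAt) Real.exp_injective.injOn]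
  simp only [Real.abs_exp]

theorem integrableOn_Ioo_zero_one_iff_integrableOn_exp_smul_comp_exp {E : Type*}
    [NormedAddCommGroup E] [NormedSpace ℝ E] (g : ℝ → E) :
    IntegrableOn g (Set.Ioo (0 : ℝ) 1) ↔
      IntegrableOn (fun x => Real.exp x • g (Real.exp x)) (Set.Iio (0 : ℝ)) := by
  rw [← image_exp_Iio_zero, integrableOn_image_iff_integrableOn_abs_deriv_smul measurableSet_Iio
    (fun x _ => (Real.hasDerivAt_exp x).hasDerivWithinAt) Real.exp_injective.injOn]
  simp only [Real.abs_exp]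

section HalfStrip

variable {E : Type*} [NormedAddCommGroup E] [NormedSpace ℂ E] {f : ℂ → E} {s t : ℝ}

theorem I_smul_integral_sub_eq_integral_of_differentiableOn
    (hf : DifferentiableOn ℂ f {z | z.re < 0}) {a b : ℝ} (ha : a < 0) (hb : b < 0) :
    (I • ∫ y in s..t, f (b + y * I)) - (I • ∫ y in s..t, f (a + y * I)) =
      (∫ x in a..b, f (x + t * I)) - ∫ x in a..b, f (x + s * I) := by
  have hrect := Complex.integral_boundary_rect_eq_zero_of_differentiableOn f
    (a + s * I) (b + t * I) (hf.mono fun z hz => ?_)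
  · simp only [Complex.add_re, Complex.ofReal_re, Complex.mul_re, Complex.I_re, mul_zero,
      Complex.ofReal_im, Complex.I_im, mul_one, sub_self, add_zero, Complex.add_im,
      Complex.mul_im, zero_add] at hrect
    rw [← sub_eq_zero, ← hrect]
    abel
  · have hz : z.re ∈ Set.uIcc a b := by simpa using hz.1
    exact hz.2.trans_lt (max_lt ha hb)

theorem I_smul_integral_eq_integral_Iio_sub_integral_Iio [CompleteSpace E]
    (hf : DifferentiableOn ℂ f {z | z.re < 0})
    (hs : IntegrableOn (fun x : ℝ => f (x + s * I)) (Set.Iio 0))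
    (ht : IntegrableOn (fun x : ℝ => f (x + t * I)) (Set.Iio 0))
    (hleft : Tendsto (fun x : ℝ => ∫ y in s..t, f (x + y * I)) atBot (𝓝 0))
    (hright : Tendsto (fun x : ℝ => ∫ y in s..t, f (x + y * I)) (𝓝[<] 0)
      (𝓝 (∫ y in s..t, f (y * I)))) :
    (I • ∫ y in s..t, f (y * I)) =
      (∫ x in Set.Iio (0 : ℝ), f (x + t * I)) - ∫ x in Set.Iio (0 : ℝ), f (x + s * I) := by
  have hvert : ∀ b : ℝ, b < 0 → (I • ∫ y in s..t, f (b + y * I)) =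
      (∫ x in Set.Iic b, f (x + t * I)) - ∫ x in Set.Iic b, f (x + s * I) := by
    intro b hb
    have hsub : Set.Iic b ⊆ Set.Iio (0 : ℝ) := Set.Iic_subset_Iio.2 hb
    refine tendsto_nhds_unique (l := atBot) (f := fun a : ℝ =>
      (I • ∫ y in s..t, f (b + y * I)) - (I • ∫ y in s..t, f (a + y * I))) ?_ ?_
    · simpa using (hleft.const_smul I).const_sub (I • ∫ y in s..t, f (b + y * I))
    · refine ((intervalIntegral_tendsto_integral_Iic b (ht.mono_set hsub) tendsto_id).sub
        (intervalIntegral_tendsto_integral_Iic b (hs.mono_set hsub) tendsto_id)).congr' ?_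
      filter_upwards [eventually_lt_atBot 0] with a ha
      exact (I_smul_integral_sub_eq_integral_of_differentiableOn hf ha hb).symm
  have hhor : ∀ {g : ℝ → E}, IntegrableOn g (Set.Iio 0) →
      Tendsto (fun b => ∫ x in Set.Iic b, g x) (𝓝[<] 0) (𝓝 (∫ x in Set.Iio 0, g x)) := by
    intro g hg
    refine ((aecover_Iio_of_Iic (tendsto_id.mono_left
      nhdsWithin_le_nhds)).integral_tendsto_of_countably_generated hg).congr' ?_
    filter_upwards [self_mem_nhdsWithin] with b hb
    rw [Measure.restrict_restrict measurableSet_Iic,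
      Set.inter_eq_left.2 (Set.Iic_subset_Iio.2 hb), id]
  refine tendsto_nhds_unique (hright.const_smul I) (((hhor ht).sub (hhor hs)).congr' ?_)
  filter_upwards [self_mem_nhdsWithin] with b hb using (hvert b hb).symm

theorem I_smul_integral_eq_of_norm_le_exp_mul [CompleteSpace E] {g : ℝ → ℝ} {δ : ℝ}
    (hst : s ≤ t) (hδ : 0 < δ) (hf : DifferentiableOn ℂ f {z | z.re < 0})
    (hs : IntegrableOn (fun x : ℝ => f (x + s * I)) (Set.Iio 0))
    (ht : IntegrableOn (fun x : ℝ => f (x + t * I)) (Set.Iio 0))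
    (hg : IntegrableOn g (Set.Ioo s t))
    (hfg : ∀ x : ℝ, x < 0 → ∀ y ∈ Set.Ioo s t, ‖f (x + y * I)‖ ≤ Real.exp (δ * x) * g y)
    (hcont : ∀ y ∈ Set.Ioo s t, Tendsto (fun x : ℝ => f (x + y * I)) (𝓝[<] 0) (𝓝 (f (y * I)))) :
    (I • ∫ y in s..t, f (y * I)) =
      (∫ x in Set.Iio (0 : ℝ), f (x + t * I)) - ∫ x in Set.Iio (0 : ℝ), f (x + s * I) := by
  have hIoo : ∀ h : ℝ → E, ∫ y in s..t, h y = ∫ y in Set.Ioo s t, h y := fun h => by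
    rw [integral_of_le hst, integral_Ioc_eq_integral_Ioo]
  refine I_smul_integral_eq_integral_Iio_sub_integral_Iio hf hs ht ?_ ?_
  · have hle : ∀ x : ℝ, x < 0 →
        ‖∫ y in s..t, f (x + y * I)‖ ≤ Real.exp (δ * x) * ∫ y in Set.Ioo s t, g y := by
      intro x hx
      rw [hIoo, ← MeasureTheory.integral_const_mul]
      exact norm_integral_le_of_norm_le (hg.const_mul _)
        ((ae_restrict_mem measurableSet_Ioo).mono (hfg x hx))
    refine squeeze_zero_norm' ((eventually_lt_atBot 0).mono hle) ?_
    simpa using (Real.tendsto_exp_atBot.comp (tendsto_id.const_mul_atBot hδ)).mul_const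
      (∫ y in Set.Ioo s t, g y)
  · simp only [hIoo]
    refine tendsto_integral_filter_of_dominated_convergence g ?_ ?_ hg
      ((ae_restrict_mem measurableSet_Ioo).mono hcont)
    · filter_upwards [self_mem_nhdsWithin] with x hx
      refine (hf.continuousOn.comp_continuous (by fun_prop) fun y => ?_).aestronglyMeasurable
      simpa using hx
    · filter_upwards [self_mem_nhdsWithin] with x hx
      filter_upwards [ae_restrict_mem measurableSet_Ioo] with y hy
      refine (hfg x hx y hy).trans (mul_le_of_le_one_left ?_ ?_)
      · exact nonneg_of_mul_nonneg_right ((norm_nonneg _).trans (hfg x hx y hy)) (Real.exp_pos _)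
      · exact Real.exp_le_one_iff.2 (mul_nonpos_of_nonneg_of_nonpos hδ.le (le_of_lt hx))

end HalfStrip

theorem one_sub_le_norm_one_sub_mul_ofReal {z : ℂ} {t : ℝ} (hz : ‖z‖ ≤ 1) (ht : 0 ≤ t) :
    1 - t ≤ ‖1 - z * t‖ := by
  have h := norm_sub_norm_le 1 (z * t)
  rw [norm_mul, Complex.norm_real, Real.norm_of_nonneg ht, norm_one] at h
  nlinarith

theorem norm_one_sub_div_two_le_norm_one_sub_mul_ofReal {z : ℂ} {t : ℝ} (hz : ‖z‖ ≤ 1)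
    (ht : t ∈ Set.Icc 0 1) : ‖1 - z‖ / 2 ≤ ‖1 - z * t‖ := by
  have hlower := one_sub_le_norm_one_sub_mul_ofReal hz ht.1
  have htriangle : ‖1 - z‖ ≤ ‖1 - z * t‖ + ‖z‖ * (1 - t) := by
    calc ‖1 - z‖ = ‖(1 - z * t) - z * ((1 - t : ℝ) : ℂ)‖ := by push_cast; ring_nf
      _ ≤ ‖1 - z * t‖ + ‖z * ((1 - t : ℝ) : ℂ)‖ := norm_sub_le _ _
      _ = ‖1 - z * t‖ + ‖z‖ * (1 - t) := by
        rw [norm_mul, Complex.norm_real, Real.norm_of_nonneg (sub_nonneg.2 ht.2)]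
  nlinarith [ht.2]

theorem re_one_sub_pos {w : ℂ} (hw : ‖w‖ ≤ 1) (hw1 : w ≠ 1) : 0 < (1 - w).re := by
  have hle : w.re ≤ 1 := (Complex.re_le_norm w).trans hw
  refine sub_pos.2 (hle.lt_of_ne fun hre => hw1 ?_)
  have him : w.im = 0 := by
    have := Complex.sq_norm_sub_sq_re w
    nlinarith [norm_nonneg w, sq_nonneg w.im]
  exact Complex.ext hre him

theorem one_sub_mul_ofReal_mem_slitPlane {z : ℂ} {t : ℝ} (hz : ‖z‖ ≤ 1) (ht : t ∈ Set.Ioo 0 1) :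
    1 - z * t ∈ Complex.slitPlane := by
  have hnorm : ‖z * t‖ < 1 := by
    rw [norm_mul, Complex.norm_real, Real.norm_of_nonneg ht.1.le]
    exact mul_lt_one_of_nonneg_of_lt_one_right hz ht.1.le ht.2
  exact Or.inl (re_one_sub_pos hnorm.le fun h => by simp [h] at hnorm)

theorem norm_cpow_neg_half (w : ℂ) : ‖w ^ (-1 / 2 : ℂ)‖ = ‖w‖ ^ (-1 / 2 : ℝ) := by
  simpa using Complex.norm_cpow_real w (-1 / 2)

theorem integrableOn_rpow_mul_one_sub_rpow {a b : ℝ} (ha : -1 < a) (hb : -1 < b) :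
    IntegrableOn (fun t : ℝ => t ^ a * (1 - t) ^ b) (Set.Ioo 0 1) := by
  have hbeta := Complex.betaIntegral_convergent (u := a + 1) (v := b + 1)
    (by simpa using neg_lt_iff_pos_add.1 ha) (by simpa using neg_lt_iff_pos_add.1 hb)
  rw [intervalIntegrable_iff_integrableOn_Ioo_of_le zero_le_one] at hbeta
  refine (IntegrableOn.congr_fun hbeta.norm fun t ht => ?_) measurableSet_Ioo
  have hcast : (1 : ℂ) - t = ((1 - t : ℝ) : ℂ) := by push_cast; ring
  simp only [norm_mul, add_sub_cancel_right, hcast, Complex.norm_cpow_real, Complex.norm_real,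
    Real.norm_of_nonneg ht.1.le, Real.norm_of_nonneg (sub_pos.2 ht.2).le]

/-- The integrand of the Euler integral `eulerIntegral`. -/
noncomputable def eulerIntegrand (ν z : ℂ) (t : ℝ) : ℂ :=
  (t : ℂ) ^ ν * (1 - t) ^ (-1 / 2 : ℂ) * (1 - z * t) ^ (-1 / 2 : ℂ)

/-- The Euler integral `∫₀¹ t^ν (1 - t)^(-1/2) (1 - zt)^(-1/2) dt`, which is
`B(ν + 1, 1/2) ₂F₁(1/2, ν + 1; ν + 3/2; z)`. -/
noncomputable def eulerIntegral (ν z : ℂ) : ℂ :=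
  ∫ t in Set.Ioo (0 : ℝ) 1, eulerIntegrand ν z t

section EulerIntegral

variable {ν : ℂ}

theorem aestronglyMeasurable_eulerIntegrand (z : ℂ) {μ : Measure ℝ} :
    AEStronglyMeasurable (eulerIntegrand ν z) μ := by
  unfold eulerIntegrand
  exact Measurable.aestronglyMeasurable (by fun_prop)

theorem norm_eulerIntegrand_le {z : ℂ} (hz : ‖z‖ ≤ 1) {r : ℝ} (hr : 0 < r) (hrz : r ≤ ‖1 - z‖)
    {t : ℝ} (ht : t ∈ Set.Ioo 0 1) :
    ‖eulerIntegrand ν z t‖ ≤ (r / 2) ^ (-1 / 4 : ℝ) * (t ^ ν.re * (1 - t) ^ (-3 / 4 : ℝ)) := by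
  have ht1 : 0 < 1 - t := sub_pos.2 ht.2
  have hle1 : 1 - t ≤ ‖1 - z * t‖ := one_sub_le_norm_one_sub_mul_ofReal hz ht.1.le
  have hle2 : r / 2 ≤ ‖1 - z * t‖ := (div_le_div_of_nonneg_right hrz zero_le_two).trans
    (norm_one_sub_div_two_le_norm_one_sub_mul_ofReal hz (Set.Ioo_subset_Icc_self ht))
  have hcast : (1 : ℂ) - t = ((1 - t : ℝ) : ℂ) := by push_cast; ring
  have hsplit : ∀ x : ℝ, 0 < x → x ^ (-1 / 2 : ℝ) = x ^ (-1 / 4 : ℝ) * x ^ (-1 / 4 : ℝ) :=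
    fun x hx => by rw [← Real.rpow_add hx]; norm_num
  have hquarter : ‖1 - z * t‖ ^ (-1 / 2 : ℝ) ≤ (1 - t) ^ (-1 / 4 : ℝ) * (r / 2) ^ (-1 / 4 : ℝ) := by
    rw [hsplit _ (ht1.trans_le hle1)]
    gcongr ?_ * ?_
    · exact Real.rpow_le_rpow_of_nonpos ht1 hle1 (by norm_num)
    · exact Real.rpow_le_rpow_of_nonpos (half_pos hr) hle2 (by norm_num)
  calc ‖eulerIntegrand ν z t‖
      = t ^ ν.re * (1 - t) ^ (-1 / 2 : ℝ) * ‖1 - z * t‖ ^ (-1 / 2 : ℝ) := by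
        rw [eulerIntegrand, norm_mul, norm_mul, Complex.norm_cpow_eq_rpow_re_of_pos ht.1, hcast,
          norm_cpow_neg_half, norm_cpow_neg_half, Complex.norm_real, Real.norm_of_nonneg ht1.le]
    _ ≤ t ^ ν.re * (1 - t) ^ (-1 / 2 : ℝ) * ((1 - t) ^ (-1 / 4 : ℝ) * (r / 2) ^ (-1 / 4 : ℝ)) := by
        have := ht.1.le
        gcongr
    _ = (r / 2) ^ (-1 / 4 : ℝ) *
        (t ^ ν.re * ((1 - t) ^ (-1 / 2 : ℝ) * (1 - t) ^ (-1 / 4 : ℝ))) := by ring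
    _ = (r / 2) ^ (-1 / 4 : ℝ) * (t ^ ν.re * (1 - t) ^ (-3 / 4 : ℝ)) := by
        rw [← Real.rpow_add ht1]; norm_num

theorem integrableOn_eulerIntegrand (hν : -1 < ν.re) {z : ℂ} (hz : ‖z‖ ≤ 1) (hz1 : z ≠ 1) :
    IntegrableOn (eulerIntegrand ν z) (Set.Ioo 0 1) :=
  ((integrableOn_rpow_mul_one_sub_rpow hν (by norm_num)).const_mul _).mono'
    (aestronglyMeasurable_eulerIntegrand z) ((ae_restrict_mem measurableSet_Ioo).mono fun _ ht =>
      norm_eulerIntegrand_le hz (norm_pos_iff.2 (sub_ne_zero.2 hz1.symm)) le_rfl ht)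

theorem exists_norm_eulerIntegral_le (hν : -1 < ν.re) :
    ∃ C, 0 ≤ C ∧ ∀ z : ℂ, ‖z‖ ≤ 1 → z ≠ 1 → ‖eulerIntegral ν z‖ ≤ C * ‖1 - z‖ ^ (-1 / 4 : ℝ) := by
  refine ⟨(1 / 2) ^ (-1 / 4 : ℝ) * ∫ t in Set.Ioo (0 : ℝ) 1, t ^ ν.re * (1 - t) ^ (-3 / 4 : ℝ),
    mul_nonneg (by positivity) (setIntegral_nonneg measurableSet_Ioo fun t ht => ?_),
    fun z hz hz1 => ?_⟩
  · have := sub_pos.2 ht.2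
    have := ht.1
    positivity
  · refine (norm_integral_le_of_norm_le
      ((integrableOn_rpow_mul_one_sub_rpow hν (by norm_num)).const_mul _)
      ((ae_restrict_mem measurableSet_Ioo).mono fun t ht => norm_eulerIntegrand_le hz
        (norm_pos_iff.2 (sub_ne_zero.2 hz1.symm)) le_rfl ht)).trans_eq ?_
    rw [MeasureTheory.integral_const_mul, div_eq_mul_one_div,
      Real.mul_rpow (norm_nonneg _) (by norm_num)]
    ring

theorem differentiableOn_eulerIntegral (hν : -1 < ν.re) :
    DifferentiableOn ℂ (eulerIntegral ν) (Metric.ball 0 1) := by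
  intro c hc
  rw [mem_ball_zero_iff] at hc
  obtain ⟨q, hcq, hq⟩ := exists_between hc
  have hnhds : Metric.ball (0 : ℂ) q ∈ 𝓝 c := Metric.isOpen_ball.mem_nhds (by simpa using hcq)
  refine DifferentiableAt.differentiableWithinAt (differentiableAt_integral_of_dominated hnhds
    (bound := fun t => ((1 - q) / 2) ^ (-1 / 4 : ℝ) * (t ^ ν.re * (1 - t) ^ (-3 / 4 : ℝ)))
    (fun z _ => aestronglyMeasurable_eulerIntegrand z) ?_ ?_
    ((integrableOn_rpow_mul_one_sub_rpow hν (by norm_num)).const_mul _))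
  · filter_upwards [ae_restrict_mem measurableSet_Ioo] with t ht z hz
    have hz : ‖z‖ < q := by simpa using hz
    refine (DifferentiableAt.const_mul ?_ _).differentiableWithinAt
    exact DifferentiableAt.cpow (by fun_prop) (by fun_prop)
      (one_sub_mul_ofReal_mem_slitPlane (hz.trans hq).le ht)
  · filter_upwards [ae_restrict_mem measurableSet_Ioo] with t ht z hz
    have hz : ‖z‖ < q := by simpa using hz
    refine norm_eulerIntegrand_le (hz.trans hq).le (sub_pos.2 hq) ?_ ht
    have := norm_sub_norm_le 1 z
    rw [norm_one] at this
    linarith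

theorem continuousWithinAt_eulerIntegral (hν : -1 < ν.re) {z : ℂ} (hz : ‖z‖ ≤ 1) (hz1 : z ≠ 1) :
    ContinuousWithinAt (eulerIntegral ν) (Metric.ball 0 1) z := by
  have hpos : 0 < ‖1 - z‖ := norm_pos_iff.2 (sub_ne_zero.2 hz1.symm)
  have hnear : ∀ᶠ w in 𝓝[Metric.ball 0 1] z, ‖1 - z‖ / 2 ≤ ‖1 - w‖ :=
    (Filter.Tendsto.eventually_const_le (half_lt_self hpos)
      (by fun_prop : Continuous fun w : ℂ => ‖1 - w‖).continuousAt).filter_mono nhdsWithin_le_nhds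
  refine continuousWithinAt_of_dominated
    (bound := fun t => (‖1 - z‖ / 2 / 2) ^ (-1 / 4 : ℝ) * (t ^ ν.re * (1 - t) ^ (-3 / 4 : ℝ)))
    (.of_forall fun w => aestronglyMeasurable_eulerIntegrand w) ?_
    ((integrableOn_rpow_mul_one_sub_rpow hν (by norm_num)).const_mul _) ?_
  · filter_upwards [hnear, self_mem_nhdsWithin] with w hw hw1
    filter_upwards [ae_restrict_mem measurableSet_Ioo] with t ht
    exact norm_eulerIntegrand_le (mem_ball_zero_iff.1 hw1).le (half_pos hpos) hw ht
  · filter_upwards [ae_restrict_mem measurableSet_Ioo] with t ht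
    refine (ContinuousAt.continuousWithinAt ?_).const_mul _
    exact ContinuousAt.cpow (by fun_prop) (by fun_prop) (one_sub_mul_ofReal_mem_slitPlane hz ht)

theorem eulerIntegral_zero (ν : ℂ) : eulerIntegral ν 0 = Complex.betaIntegral (ν + 1) (1 / 2) := by
  rw [eulerIntegral, Complex.betaIntegral, integral_of_le zero_le_one,
    integral_Ioc_eq_integral_Ioo]
  refine setIntegral_congr_fun measurableSet_Ioo fun t _ => ?_
  simp only [eulerIntegrand, zero_mul, sub_zero, Complex.one_cpow, mul_one, add_sub_cancel_right]
  norm_num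

theorem sin_mul_pi_ne_zero_of_re_mem_Ioo (hν : ν.re ∈ Set.Ioo (-1) 0) :
    Complex.sin (ν * π) ≠ 0 := by
  rw [Ne, Complex.sin_eq_zero_iff]
  rintro ⟨k, hk⟩
  have hνk : ν = k := mul_right_cancel₀ (Complex.ofReal_ne_zero.2 Real.pi_ne_zero) hk
  rw [hνk, Complex.intCast_re] at hν
  have hk1 : (-1 : ℤ) < k := by exact_mod_cast hν.1
  have hk0 : k < 0 := by exact_mod_cast hν.2
  lia

theorem eulerIntegral_zero_mul_eulerIntegral_zero (hν : ν.re ∈ Set.Ioo (-1) 0) :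
    eulerIntegral ν 0 * eulerIntegral (-ν - 1) 0 * Complex.sin (ν * π) * (2 * ν + 1) =
      -(2 * π) * Complex.cos (ν * π) := by
  have hpi : (π : ℂ) ≠ 0 := Complex.ofReal_ne_zero.2 Real.pi_ne_zero
  have hsin := sin_mul_pi_ne_zero_of_re_mem_Ioo hν
  have hhalf : Complex.Gamma (1 / 2) * Complex.Gamma (1 / 2) = π := by
    have h := Complex.Gamma_mul_Gamma_one_sub (1 / 2)
    rwa [show (1 : ℂ) - 1 / 2 = 1 / 2 by norm_num, mul_one_div, Complex.sin_pi_div_two,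
      div_one] at h
  have hnum : Complex.Gamma (ν + 1) * Complex.Gamma (-ν) * Complex.sin (ν * π) = -π := by
    have h := Complex.Gamma_mul_Gamma_one_sub (ν + 1)
    rw [show 1 - (ν + 1) = -ν by ring, show (π : ℂ) * (ν + 1) = ν * π + π by ring,
      Complex.sin_add_pi] at h
    rw [h, div_neg, neg_mul, div_mul_cancel₀ _ hsin]
  have hden : (2 * ν + 1) * ((Complex.Gamma (ν + 3 / 2))⁻¹ * (Complex.Gamma (1 / 2 - ν))⁻¹) =
      2 * Complex.cos (ν * π) / π := by
    have hrefl := Complex.Gamma_mul_Gamma_one_sub (ν + 1 / 2)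
    rw [show 1 - (ν + 1 / 2) = 1 / 2 - ν by ring,
      show (π : ℂ) * (ν + 1 / 2) = ν * π + π / 2 by ring, Complex.sin_add_pi_div_two] at hrefl
    have hshift := Complex.one_div_Gamma_eq_self_mul_one_div_Gamma_add_one (ν + 1 / 2)
    rw [show ν + 1 / 2 + 1 = ν + 3 / 2 by ring] at hshift
    rw [show 2 * Complex.cos (ν * π) / π = 2 * (π / Complex.cos (ν * π))⁻¹ by field_simp, ← hrefl,
      mul_inv, hshift]
    ring
  rw [eulerIntegral_zero, eulerIntegral_zero,
    Complex.betaIntegral_eq_Gamma_mul_div _ _ (by simp; linarith [hν.1]) (by norm_num),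
    Complex.betaIntegral_eq_Gamma_mul_div _ _ (by simp; linarith [hν.2]) (by norm_num),
    show -ν - 1 + 1 = -ν by ring, show ν + 1 + 1 / 2 = ν + 3 / 2 by ring,
    show -ν + 1 / 2 = 1 / 2 - ν by ring]
  calc _ = (Complex.Gamma (ν + 1) * Complex.Gamma (-ν) * Complex.sin (ν * π)) *
        (Complex.Gamma (1 / 2) * Complex.Gamma (1 / 2)) *
        ((2 * ν + 1) * ((Complex.Gamma (ν + 3 / 2))⁻¹ * (Complex.Gamma (1 / 2 - ν))⁻¹)) := by ring
    _ = -(2 * π) * Complex.cos (ν * π) := by rw [hnum, hhalf, hden]; field_simp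

end EulerIntegral

theorem norm_one_sub_exp_ofReal_mul_I (φ : ℝ) :
    ‖1 - Complex.exp (φ * I)‖ = 2 * |Real.sin (φ / 2)| := by
  rw [norm_sub_rev, mul_comm (φ : ℂ), Complex.norm_exp_I_mul_ofReal_sub_one, norm_mul,
    Real.norm_two, Real.norm_eq_abs]

theorem exp_ofReal_mul_I_ne_one {φ : ℝ} (hφ : Real.sin (φ / 2) ≠ 0) : Complex.exp (φ * I) ≠ 1 := by
  have hnorm : 0 < ‖1 - Complex.exp (φ * I)‖ := by
    rw [norm_one_sub_exp_ofReal_mul_I]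
    positivity
  exact (sub_ne_zero.1 (norm_pos_iff.1 hnorm)).symm

theorem mul_cpow_of_re_pos {w z : ℂ} (hw : 0 < w.re) (hz : 0 < z.re) (a : ℂ) :
    (w * z) ^ a = w ^ a * z ^ a := by
  have hw0 : w ≠ 0 := fun h => by simp [h] at hw
  have hz0 : z ≠ 0 := fun h => by simp [h] at hz
  have hargw := abs_lt.1 (Complex.abs_arg_lt_pi_div_two_iff.2 (Or.inl hw))
  have hargz := abs_lt.1 (Complex.abs_arg_lt_pi_div_two_iff.2 (Or.inl hz))
  have hlog : Complex.log (w * z) = Complex.log w + Complex.log z :=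
    (Complex.log_mul_eq_add_log_iff hw0 hz0).2 ⟨by linarith [hargw.1, hargz.1],
      by linarith [hargw.2, hargz.2]⟩
  rw [Complex.cpow_def_of_ne_zero (mul_ne_zero hw0 hz0), Complex.cpow_def_of_ne_zero hw0,
    Complex.cpow_def_of_ne_zero hz0, hlog, add_mul, Complex.exp_add]

theorem exp_mul_I_mul_ofReal_cpow {y r : ℝ} (hy : y ∈ Set.Ioc (-π) π) (hr : 0 < r) (a : ℂ) :
    (Complex.exp (y * I) * r) ^ a = Complex.exp (a * y * I) * (r : ℂ) ^ a := by
  have hlog : Complex.log (Complex.exp (y * I) * r) = Real.log r + y * I := by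
    rw [Complex.log_mul_ofReal r hr _ (Complex.exp_ne_zero _),
      Complex.log_exp (by simpa using hy.1) (by simpa using hy.2)]
  have hr0 : (r : ℂ) ≠ 0 := Complex.ofReal_ne_zero.2 hr.ne'
  rw [Complex.cpow_def_of_ne_zero (mul_ne_zero (Complex.exp_ne_zero _) hr0),
    Complex.cpow_def_of_ne_zero hr0, hlog, ← Complex.exp_add, Complex.ofReal_log hr.le]
  ring_nf

/-- The kernel `(2 (cos β - cos θ))^(-1/2)` of the Mehler–Dirichlet integral at `cos θ`. -/
noncomputable def mehlerKernel (θ β : ℝ) : ℝ := (√(2 * (Real.cos β - Real.cos θ)))⁻¹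

section MehlerKernel

variable {θ β : ℝ}

theorem mehlerKernel_nonneg (θ β : ℝ) : 0 ≤ mehlerKernel θ β := by unfold mehlerKernel; positivity

theorem mehlerKernel_neg (θ β : ℝ) : mehlerKernel θ (-β) = mehlerKernel θ β := by
  rw [mehlerKernel, Real.cos_neg, mehlerKernel]

@[fun_prop]
theorem measurable_mehlerKernel (θ : ℝ) : Measurable (mehlerKernel θ) := by
  unfold mehlerKernel; fun_prop

theorem cos_lt_cos_of_mem_Ioo_neg_self (hθ : θ ≤ π) (hβ : β ∈ Set.Ioo (-θ) θ) :
    Real.cos θ < Real.cos β := by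
  rw [← Real.cos_abs β]
  exact Real.cos_lt_cos_of_nonneg_of_le_pi (abs_nonneg β) hθ (abs_lt.2 hβ)

theorem hasDerivAt_arcsin_sin_half_div_sin_half (hθ : θ ∈ Set.Ioo 0 π)
    (hβ : β ∈ Set.Ioo (-θ) θ) :
    HasDerivAt (fun y => Real.arcsin (Real.sin (y / 2) / Real.sin (θ / 2)))
      (Real.cos (β / 2) * mehlerKernel θ β) β := by
  have hs : 0 < Real.sin (θ / 2) :=
    Real.sin_pos_of_pos_of_lt_pi (half_pos hθ.1) (by linarith [hθ.1, hθ.2])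
  set u := Real.sin (β / 2) / Real.sin (θ / 2) with hu
  have hcos : 2 * (Real.cos β - Real.cos θ) = (2 * Real.sin (θ / 2)) ^ 2 * (1 - u ^ 2) := by
    have hhalf (x : ℝ) : Real.cos x = 1 - 2 * Real.sin (x / 2) ^ 2 := by
      rw [Real.sin_sq_eq_half_sub, mul_div_cancel₀ x two_ne_zero]
      ring
    rw [hhalf β, hhalf θ, hu]
    field_simp
    ring
  have hu2 : u ^ 2 < 1 := by
    have h := sub_pos.2 (cos_lt_cos_of_mem_Ioo_neg_self hθ.2.le hβ)
    have : 0 < 1 - u ^ 2 := by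
      by_contra! hle
      nlinarith [mul_nonneg (sq_nonneg (2 * Real.sin (θ / 2))) (neg_nonneg.2 hle)]
    linarith
  have hu1 := abs_lt.1 ((sq_lt_one_iff_abs_lt_one u).1 hu2)
  have hderiv := (Real.hasDerivAt_arcsin hu1.1.ne' hu1.2.ne).comp β
    ((((hasDerivAt_id β).div_const 2).sin).div_const (Real.sin (θ / 2)))
  refine hderiv.congr_deriv ?_
  rw [mehlerKernel, hcos, Real.sqrt_mul (sq_nonneg _), Real.sqrt_sq (by positivity)]
  simp only [id_eq]
  field_simp

theorem integrableOn_mehlerKernel (hθ : θ ∈ Set.Ioo 0 π) :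
    IntegrableOn (mehlerKernel θ) (Set.Ioo (-θ) θ) := by
  have hle : -θ ≤ θ := by linarith [hθ.1]
  have hcos (β : ℝ) (hβ : β ∈ Set.Ioo (-θ) θ) : Real.cos (θ / 2) ≤ Real.cos (β / 2) :=
    (cos_lt_cos_of_mem_Ioo_neg_self (by linarith [hθ.1, hθ.2])
      ⟨by linarith [hβ.1], by linarith [hβ.2]⟩).le
  have hcosθ : 0 < Real.cos (θ / 2) :=
    Real.cos_pos_of_mem_Ioo ⟨by linarith [hθ.1, hθ.2], by linarith [hθ.2]⟩
  have hderiv :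
      IntervalIntegrable (fun β => Real.cos (β / 2) * mehlerKernel θ β) volume (-θ) θ := by
    refine intervalIntegrable_deriv_of_nonneg
      (g := fun y => Real.arcsin (Real.sin (y / 2) / Real.sin (θ / 2))) (by fun_prop) ?_ ?_ <;>
      rw [min_eq_left hle, max_eq_right hle] <;> intro β hβ
    · exact hasDerivAt_arcsin_sin_half_div_sin_half hθ hβ
    · exact mul_nonneg (hcosθ.le.trans (hcos β hβ)) (mehlerKernel_nonneg θ β)
  rw [intervalIntegrable_iff_integrableOn_Ioo_of_le hle] at hderiv
  refine (hderiv.const_mul (Real.cos (θ / 2))⁻¹).mono' (by fun_prop) ?_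
  filter_upwards [ae_restrict_mem measurableSet_Ioo] with β hβ
  rw [Real.norm_of_nonneg (mehlerKernel_nonneg θ β), ← mul_assoc]
  exact le_mul_of_one_le_left (mehlerKernel_nonneg θ β)
    ((one_le_inv_mul₀ hcosθ).2 (hcos β hβ))

end MehlerKernel

/-- The kernel `((1 - e^(ζ + iθ)) (1 - e^(ζ - iθ)))^(-1/2)`. On the half lines `Im ζ = ±θ` it is a
factor of `eulerIntegrand`, and on the imaginary axis it restricts to `mehlerKernel θ`, up to a
phase. -/
noncomputable def halfStripKernel (θ : ℝ) (ζ : ℂ) : ℂ :=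
  (1 - Complex.exp (ζ + θ * I)) ^ (-1 / 2 : ℂ) * (1 - Complex.exp (ζ - θ * I)) ^ (-1 / 2 : ℂ)

section HalfStripKernel

variable {θ : ℝ}

theorem halfStripKernel_neg (θ : ℝ) (ζ : ℂ) : halfStripKernel (-θ) ζ = halfStripKernel θ ζ := by
  rw [halfStripKernel, halfStripKernel, mul_comm]
  push_cast
  ring_nf

theorem differentiableAt_halfStripKernel {ζ : ℂ} (hadd : 0 < (1 - Complex.exp (ζ + θ * I)).re)
    (hsub : 0 < (1 - Complex.exp (ζ - θ * I)).re) : DifferentiableAt ℂ (halfStripKernel θ) ζ :=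
  DifferentiableAt.mul (DifferentiableAt.cpow (by fun_prop) (by fun_prop) (Or.inl hadd))
    (DifferentiableAt.cpow (by fun_prop) (by fun_prop) (Or.inl hsub))

theorem differentiableOn_halfStripKernel (θ : ℝ) :
    DifferentiableOn ℂ (halfStripKernel θ) {ζ | ζ.re < 0} := by
  intro ζ hζ
  have hre (w : ℂ) (hw : w.re = ζ.re) : 0 < (1 - Complex.exp w).re := by
    have hlt : ‖Complex.exp w‖ < 1 := by rwa [Complex.norm_exp, Real.exp_lt_one_iff, hw]
    exact re_one_sub_pos hlt.le fun h => by simp [h] at hlt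
  exact (differentiableAt_halfStripKernel (hre _ (by simp))
    (hre _ (by simp))).differentiableWithinAt

theorem re_one_sub_exp_ofReal_mul_I_pos {φ : ℝ} (hφ : Real.sin (φ / 2) ≠ 0) :
    0 < (1 - Complex.exp (φ * I)).re :=
  re_one_sub_pos (Complex.norm_exp_ofReal_mul_I φ).le (exp_ofReal_mul_I_ne_one hφ)

theorem sin_half_add_ne_zero {y : ℝ} (hθ : θ ≤ π) (hy : y ∈ Set.Ioo (-θ) θ) :
    Real.sin ((y + θ) / 2) ≠ 0 :=
  (Real.sin_pos_of_pos_of_lt_pi (by linarith [hy.1]) (by linarith [hy.2])).ne'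

theorem sin_half_sub_ne_zero {y : ℝ} (hθ : θ ≤ π) (hy : y ∈ Set.Ioo (-θ) θ) :
    Real.sin ((y - θ) / 2) ≠ 0 :=
  (Real.sin_neg_of_neg_of_neg_pi_lt (by linarith [hy.2]) (by linarith [hy.1])).ne

theorem halfStripKernel_ofReal_mul_I {y : ℝ} (hθ : θ ≤ π) (hy : y ∈ Set.Ioo (-θ) θ) :
    halfStripKernel θ (y * I) = Complex.exp (-(y / 2) * I) * mehlerKernel θ y := by
  have hadd := re_one_sub_exp_ofReal_mul_I_pos (sin_half_add_ne_zero hθ hy)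
  have hsub := re_one_sub_exp_ofReal_mul_I_pos (sin_half_sub_ne_zero hθ hy)
  have hcos : 0 < 2 * (Real.cos y - Real.cos θ) :=
    mul_pos two_pos (sub_pos.2 (cos_lt_cos_of_mem_Ioo_neg_self hθ hy))
  have hprod : (1 - Complex.exp ((y + θ : ℝ) * I)) * (1 - Complex.exp ((y - θ : ℝ) * I)) =
      Complex.exp (y * I) * (2 * (Real.cos y - Real.cos θ) : ℝ) := by
    push_cast
    rw [Complex.cos, Complex.cos, add_mul (y : ℂ), sub_mul (y : ℂ), Complex.exp_add,
      Complex.exp_sub, neg_mul, neg_mul, Complex.exp_neg, Complex.exp_neg]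
    field_simp
    ring
  rw [halfStripKernel, ← add_mul, ← sub_mul, ← Complex.ofReal_add, ← Complex.ofReal_sub,
    ← mul_cpow_of_re_pos hadd hsub, hprod,
    exp_mul_I_mul_ofReal_cpow ⟨by linarith [hy.1], by linarith [hy.2]⟩ hcos]
  congr 1
  · ring_nf
  · rw [mehlerKernel, Real.sqrt_eq_rpow, ← Real.rpow_neg hcos.le, Complex.ofReal_cpow hcos.le]
    norm_num

theorem norm_halfStripKernel_add_le {x y : ℝ} (hx : x ≤ 0) (hθ : θ ≤ π)
    (hy : y ∈ Set.Ioo (-θ) θ) : ‖halfStripKernel θ (x + y * I)‖ ≤ 2 * mehlerKernel θ y := by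
  have hfactor {φ : ℝ} (hφ : Real.sin (φ / 2) ≠ 0) :
      ‖(1 - Complex.exp (x + φ * I)) ^ (-1 / 2 : ℂ)‖ ≤
        √2 * ‖(1 - Complex.exp (φ * I)) ^ (-1 / 2 : ℂ)‖ := by
    have hpos : 0 < ‖1 - Complex.exp (φ * I)‖ :=
      norm_pos_iff.2 (sub_ne_zero.2 (exp_ofReal_mul_I_ne_one hφ).symm)
    have hle := norm_one_sub_div_two_le_norm_one_sub_mul_ofReal
      (Complex.norm_exp_ofReal_mul_I φ).le ⟨(Real.exp_pos x).le, Real.exp_le_one_iff.2 hx⟩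
    rw [Complex.ofReal_exp, ← Complex.exp_add, add_comm] at hle
    rw [norm_cpow_neg_half, norm_cpow_neg_half]
    calc _ ≤ (‖1 - Complex.exp (φ * I)‖ / 2) ^ (-1 / 2 : ℝ) :=
          Real.rpow_le_rpow_of_nonpos (half_pos hpos) hle (by norm_num)
      _ = √2 * ‖1 - Complex.exp (φ * I)‖ ^ (-1 / 2 : ℝ) := by
          rw [Real.div_rpow hpos.le zero_le_two, Real.sqrt_eq_rpow, div_eq_mul_inv, mul_comm,
            ← Real.rpow_neg zero_le_two]
          norm_num
  have hadd := hfactor (sin_half_add_ne_zero hθ hy)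
  have hsub := hfactor (sin_half_sub_ne_zero hθ hy)
  have hnorm : ‖halfStripKernel θ (y * I)‖ = mehlerKernel θ y := by
    rw [halfStripKernel_ofReal_mul_I hθ hy, norm_mul, Complex.norm_real,
      Real.norm_of_nonneg (mehlerKernel_nonneg θ y)]
    have := Complex.norm_exp_ofReal_mul_I (-(y / 2))
    push_cast at this
    rw [this, one_mul]
  rw [← hnorm, halfStripKernel, halfStripKernel, norm_mul, norm_mul,
    ← Real.mul_self_sqrt zero_le_two]
  push_cast at hadd hsub
  rw [add_mul, ← add_assoc] at hadd
  rw [sub_mul, ← add_sub_assoc] at hsub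
  calc _ ≤ _ := mul_le_mul hadd hsub (norm_nonneg _) (by positivity)
    _ = _ := by ring

end HalfStripKernel

/-- The function on the half strip `Re ζ < 0`, `|Im ζ| < θ` whose contour integral relates
`eulerIntegral` on the horizontal edges to the Mehler–Dirichlet integral on the vertical one. -/
noncomputable def halfStripIntegrand (ν : ℂ) (θ : ℝ) (ζ : ℂ) : ℂ :=
  Complex.exp ((ν + 1) * ζ) * halfStripKernel θ ζ

/-- The boundary function `e^(i(ν + 1)θ) u_ν(e^(2iθ))`, where `u_ν` is `eulerIntegral ν`. For
`0 < θ < π` it is `Q_ν(cos θ) + (iπ/2) P_ν(cos θ)`, with `Q_ν` the Ferrers function of the second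
kind. -/
noncomputable def eulerBoundary (ν : ℂ) (θ : ℝ) : ℂ :=
  Complex.exp ((ν + 1) * θ * I) * eulerIntegral ν (Complex.exp ((2 * θ : ℝ) * I))

section Mehler

variable {ν : ℂ} {θ : ℝ}

theorem halfStripIntegrand_ofReal_add (ν : ℂ) (θ x : ℝ) :
    halfStripIntegrand ν θ (x + θ * I) = Complex.exp ((ν + 1) * θ * I) *
      (Real.exp x • eulerIntegrand ν (Complex.exp ((2 * θ : ℝ) * I)) (Real.exp x)) := by
  have hpow : (Real.exp x : ℂ) ^ ν = Complex.exp (x * ν) := by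
    rw [Complex.cpow_def_of_ne_zero (Complex.ofReal_ne_zero.2 (Real.exp_pos x).ne'),
      ← Complex.ofReal_log (Real.exp_pos x).le, Real.log_exp]
  rw [halfStripIntegrand, halfStripKernel, eulerIntegrand, hpow, Complex.real_smul,
    Complex.ofReal_exp, add_sub_cancel_right, ← Complex.exp_add (_ * I),
    show (x : ℂ) + θ * I + θ * I = (2 * θ : ℝ) * I + x by push_cast; ring,
    show (ν + 1) * (x + θ * I) = (ν + 1) * θ * I + x + x * ν by ring, Complex.exp_add,
    Complex.exp_add]
  ring

theorem differentiableOn_halfStripIntegrand (ν : ℂ) (θ : ℝ) :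
    DifferentiableOn ℂ (halfStripIntegrand ν θ) {ζ | ζ.re < 0} :=
  DifferentiableOn.mul (by fun_prop) (differentiableOn_halfStripKernel θ)

theorem integrableOn_halfStripIntegrand (hν : -1 < ν.re) (hθ : Real.sin θ ≠ 0) :
    IntegrableOn (fun x : ℝ => halfStripIntegrand ν θ (x + θ * I)) (Set.Iio 0) := by
  simp only [halfStripIntegrand_ofReal_add]
  refine ((integrableOn_Ioo_zero_one_iff_integrableOn_exp_smul_comp_exp _).1
    (integrableOn_eulerIntegrand hν (Complex.norm_exp_ofReal_mul_I _).le ?_)).const_mul _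
  exact exp_ofReal_mul_I_ne_one (by rwa [mul_div_cancel_left₀ θ two_ne_zero])

theorem integral_halfStripIntegrand (ν : ℂ) (θ : ℝ) :
    ∫ x in Set.Iio (0 : ℝ), halfStripIntegrand ν θ (x + θ * I) = eulerBoundary ν θ := by
  simp only [halfStripIntegrand_ofReal_add]
  rw [MeasureTheory.integral_const_mul, ← integral_Ioo_zero_one_eq_integral_exp_smul_comp_exp,
    eulerBoundary, eulerIntegral]

theorem norm_halfStripIntegrand_le {x y : ℝ} (hx : x ≤ 0) (hθ : θ ≤ π)
    (hy : y ∈ Set.Ioo (-θ) θ) : ‖halfStripIntegrand ν θ (x + y * I)‖ ≤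
      Real.exp ((ν.re + 1) * x) * (Real.exp (|ν.im| * θ) * (2 * mehlerKernel θ y)) := by
  have hre : ((ν + 1) * (x + y * I)).re = (ν.re + 1) * x + -(ν.im * y) := by
    simp [sub_eq_add_neg]
  have him : -(ν.im * y) ≤ |ν.im| * θ :=
    (neg_le_abs _).trans (abs_mul ν.im y ▸
      mul_le_mul_of_nonneg_left (abs_lt.2 hy).le (abs_nonneg _))
  rw [halfStripIntegrand, norm_mul, Complex.norm_exp, hre, Real.exp_add, mul_assoc]
  gcongr
  exact norm_halfStripKernel_add_le hx hθ hy

theorem halfStripIntegrand_ofReal_mul_I {y : ℝ} (hθ : θ ≤ π) (hy : y ∈ Set.Ioo (-θ) θ) :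
    halfStripIntegrand ν θ (y * I) = Complex.exp ((ν + 1 / 2) * y * I) * mehlerKernel θ y := by
  rw [halfStripIntegrand, halfStripKernel_ofReal_mul_I hθ hy, ← mul_assoc, ← Complex.exp_add]
  ring_nf

theorem tendsto_halfStripIntegrand {y : ℝ} (hθ : θ ≤ π) (hy : y ∈ Set.Ioo (-θ) θ) :
    Tendsto (fun x : ℝ => halfStripIntegrand ν θ (x + y * I)) (𝓝[<] 0)
      (𝓝 (halfStripIntegrand ν θ (y * I))) := by
  have hadd := re_one_sub_exp_ofReal_mul_I_pos (sin_half_add_ne_zero hθ hy)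
  have hsub := re_one_sub_exp_ofReal_mul_I_pos (sin_half_sub_ne_zero hθ hy)
  push_cast [add_mul, sub_mul] at hadd hsub
  have hcont : ContinuousAt (halfStripIntegrand ν θ) (y * I) :=
    ContinuousAt.mul (by fun_prop) (differentiableAt_halfStripKernel hadd hsub).continuousAt
  have hline : Tendsto (fun x : ℝ => (x : ℂ) + y * I) (𝓝[<] 0) (𝓝 (y * I)) := by
    have h : Continuous fun x : ℝ => (x : ℂ) + y * I := by fun_prop
    simpa using (h.tendsto 0).mono_left nhdsWithin_le_nhds
  exact hcont.tendsto.comp hline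

theorem I_mul_integral_exp_mul_mehlerKernel (hν : -1 < ν.re) (hθ : θ ∈ Set.Ioo 0 π) :
    I * ∫ y in -θ..θ, Complex.exp ((ν + 1 / 2) * y * I) * mehlerKernel θ y =
      eulerBoundary ν θ - eulerBoundary ν (-θ) := by
  have hsin : Real.sin θ ≠ 0 := (Real.sin_pos_of_mem_Ioo hθ).ne'
  have hle : -θ ≤ θ := by linarith [hθ.1]
  have hneg (ζ : ℂ) : halfStripIntegrand ν (-θ) ζ = halfStripIntegrand ν θ ζ := by
    rw [halfStripIntegrand, halfStripKernel_neg, halfStripIntegrand]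
  have hedge := integrableOn_halfStripIntegrand (θ := -θ) hν (by rwa [Real.sin_neg, neg_ne_zero])
  have hedge_eq := integral_halfStripIntegrand ν (-θ)
  simp only [hneg] at hedge hedge_eq
  have hcontour := I_smul_integral_eq_of_norm_le_exp_mul hle (neg_lt_iff_pos_add.1 hν)
    (differentiableOn_halfStripIntegrand ν θ) hedge
    (integrableOn_halfStripIntegrand hν hsin)
    (((integrableOn_mehlerKernel hθ).const_mul 2).const_mul _)
    (fun x hx y hy => norm_halfStripIntegrand_le hx.le hθ.2.le hy)
    fun y hy => tendsto_halfStripIntegrand hθ.2.le hy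
  rw [hedge_eq, integral_halfStripIntegrand, smul_eq_mul] at hcontour
  rw [← hcontour, integral_of_le hle, integral_of_le hle, integral_Ioc_eq_integral_Ioo,
    integral_Ioc_eq_integral_Ioo]
  congr 1
  exact setIntegral_congr_fun measurableSet_Ioo fun y hy =>
    (halfStripIntegrand_ofReal_mul_I hθ.2.le hy).symm

theorem legendreP_cos (ν : ℂ) (hθ : θ ∈ Set.Ioo 0 π) :
    legendreP ν (Real.cos θ) =
      2 / π * ∫ β in Set.Ioo 0 θ, Complex.cos ((ν + 1 / 2) * β) * mehlerKernel θ β := by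
  have hcos : Real.cos θ ≠ 1 := (Real.mapsTo_cos_Ioo hθ).2.ne
  rw [legendreP, if_neg hcos, Real.arccos_cos hθ.1.le hθ.2.le, integral_of_le hθ.1.le,
    integral_Ioc_eq_integral_Ioo]
  push_cast
  congr 1
  refine setIntegral_congr_fun measurableSet_Ioo fun β _ => ?_
  simp only [mehlerKernel, Complex.ofReal_inv, div_eq_mul_inv]
  ring_nf

theorem integral_neg_self_eq_integral_add_comp_neg {E : Type*} [NormedAddCommGroup E]
    [NormedSpace ℝ E] {f : ℝ → E} {a : ℝ} (hf : IntervalIntegrable f volume (-a) a) :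
    ∫ x in -a..a, f x = ∫ x in 0..a, f x + f (-x) := by
  have hzero : 0 ∈ Set.uIcc (-a) a := by
    rw [Set.mem_uIcc]
    grind
  have hleft : IntervalIntegrable f volume (-a) 0 :=
    hf.mono_set (Set.uIcc_subset_uIcc_left hzero)
  have hright : IntervalIntegrable f volume 0 a :=
    hf.mono_set (Set.uIcc_subset_uIcc_right hzero)
  have hneg : IntervalIntegrable (fun x => f (-x)) volume 0 a := by
    simpa using ((IntervalIntegrable.iff_comp_neg).1 hleft).symm
  rw [integral_add hright hneg, integral_comp_neg, neg_zero, add_comm,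
    integral_add_adjacent_intervals hleft hright]

theorem intervalIntegrable_exp_mul_mehlerKernel (ν : ℂ) (hθ : θ ∈ Set.Ioo 0 π) :
    IntervalIntegrable (fun y : ℝ => Complex.exp ((ν + 1 / 2) * y * I) * mehlerKernel θ y)
      volume (-θ) θ := by
  have hK : IntervalIntegrable (fun y : ℝ => (mehlerKernel θ y : ℂ)) volume (-θ) θ := by
    rw [intervalIntegrable_iff_integrableOn_Ioo_of_le (by linarith [hθ.1])]
    exact (integrableOn_mehlerKernel hθ).ofReal
  exact hK.continuousOn_mul (by fun_prop)

theorem I_mul_pi_mul_legendreP_cos (hν : -1 < ν.re) (hθ : θ ∈ Set.Ioo 0 π) :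
    I * π * legendreP ν (Real.cos θ) = eulerBoundary ν θ - eulerBoundary ν (-θ) := by
  have hpi : (π : ℂ) ≠ 0 := Complex.ofReal_ne_zero.2 Real.pi_ne_zero
  have hsymm (y : ℝ) : Complex.exp ((ν + 1 / 2) * y * I) * mehlerKernel θ y +
      Complex.exp ((ν + 1 / 2) * (-y : ℝ) * I) * mehlerKernel θ (-y) =
        2 * (Complex.cos ((ν + 1 / 2) * y) * mehlerKernel θ y) := by
    rw [mehlerKernel_neg, Complex.cos]
    push_cast
    ring_nf
  rw [← I_mul_integral_exp_mul_mehlerKernel hν hθ,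
    integral_neg_self_eq_integral_add_comp_neg (intervalIntegrable_exp_mul_mehlerKernel ν hθ),
    legendreP_cos ν hθ, mul_assoc]
  simp only [hsymm]
  rw [integral_of_le hθ.1.le, integral_Ioc_eq_integral_Ioo, MeasureTheory.integral_const_mul]
  field_simp

end Mehler

section Connection

variable {ν : ℂ} {θ : ℝ}

theorem eulerBoundary_add_pi (ν : ℂ) (θ : ℝ) :
    eulerBoundary ν (θ + π) = -(Complex.exp (ν * π * I) * eulerBoundary ν θ) := by
  have hperiod : Complex.exp ((2 * (θ + π) : ℝ) * I) = Complex.exp ((2 * θ : ℝ) * I) := by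
    rw [← Complex.exp_periodic ((2 * θ : ℝ) * I)]
    push_cast
    ring_nf
  rw [eulerBoundary, eulerBoundary, hperiod,
    show (ν + 1) * (θ + π : ℝ) * I = ν * π * I + (ν + 1) * θ * I + π * I by push_cast; ring,
    Complex.exp_add, Complex.exp_add, Complex.exp_pi_mul_I]
  ring

theorem exp_mul_I_sub_exp_neg_mul_I (z : ℂ) :
    Complex.exp (z * I) - Complex.exp (-z * I) = 2 * I * Complex.sin z := by
  rw [Complex.sin]
  linear_combination (Complex.exp (z * I) - Complex.exp (-z * I)) * Complex.I_mul_I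

theorem exp_mul_legendreP_cos_sub_legendreP_neg_cos (hν : -1 < ν.re) (hθ : θ ∈ Set.Ioo 0 π) :
    π * (Complex.exp (ν * π * I) * legendreP ν (Real.cos θ) - legendreP ν (-Real.cos θ)) =
      2 * Complex.sin (ν * π) * eulerBoundary ν θ := by
  have hmehler := I_mul_pi_mul_legendreP_cos hν hθ
  have hmehler_neg := I_mul_pi_mul_legendreP_cos (θ := π - θ) hν
    ⟨sub_pos.2 hθ.2, sub_lt_self π hθ.1⟩
  have hshift := eulerBoundary_add_pi ν (-θ)
  have hshift_neg := eulerBoundary_add_pi ν (θ - π)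
  rw [Real.cos_pi_sub, neg_sub] at hmehler_neg
  rw [neg_add_eq_sub] at hshift
  rw [sub_add_cancel] at hshift_neg
  have hexp := exp_mul_I_sub_exp_neg_mul_I (ν * π)
  have hinv : Complex.exp (-(ν * π) * I) * Complex.exp (ν * π * I) = 1 := by
    rw [← Complex.exp_add]; simp
  apply mul_left_cancel₀ Complex.I_ne_zero
  linear_combination Complex.exp (ν * π * I) * hmehler - hmehler_neg + eulerBoundary ν θ * hexp -
    hshift + Complex.exp (-(ν * π) * I) * hshift_neg - eulerBoundary ν (θ - π) * hinv

theorem legendreP_neg_sub_one (ν : ℂ) (x : ℝ) : legendreP (-ν - 1) x = legendreP ν x := by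
  have hcos (β : ℂ) :
      Complex.cos ((2 * (-ν - 1) + 1) * β / 2) = Complex.cos ((2 * ν + 1) * β / 2) := by
    rw [← Complex.cos_neg]
    ring_nf
  simp only [legendreP, hcos]

/-- The product of the Euler integrals attached to the degrees `ν` and `-ν - 1`, which share the
same Legendre function. -/
noncomputable def eulerProduct (ν z : ℂ) : ℂ := eulerIntegral ν z * eulerIntegral (-ν - 1) z

/-- The quadratic form in `P_ν(x)` and `P_ν(-x)` whose value at `x = cos θ` is, up to a constant
factor, `eulerBoundary ν θ * eulerBoundary (-ν - 1) θ`. -/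
noncomputable def legendreForm (ν : ℂ) (x : ℝ) : ℂ :=
  legendreP ν x ^ 2 - legendreP ν (-x) ^ 2 +
    2 * I * Complex.sin (ν * π) * legendreP ν x * legendreP ν (-x)

theorem eulerBoundary_mul_eulerBoundary (ν : ℂ) (θ : ℝ) :
    eulerBoundary ν θ * eulerBoundary (-ν - 1) θ =
      Complex.exp (θ * I) * eulerProduct ν (Complex.exp ((2 * θ : ℝ) * I)) := by
  have hexp : Complex.exp (θ * I) =
      Complex.exp ((ν + 1) * θ * I) * Complex.exp ((-ν - 1 + 1) * θ * I) := by
    rw [← Complex.exp_add]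
    ring_nf
  rw [eulerBoundary, eulerBoundary, eulerProduct, hexp]
  ring

theorem pi_sq_mul_legendreForm_cos (hν : ν.re ∈ Set.Ioo (-1) 0) (hθ : θ ∈ Set.Ioo 0 π) :
    π ^ 2 * legendreForm ν (Real.cos θ) = -(4 * Complex.sin (ν * π) ^ 2) *
      (Complex.exp (θ * I) * eulerProduct ν (Complex.exp ((2 * θ : ℝ) * I))) := by
  have hconn := exp_mul_legendreP_cos_sub_legendreP_neg_cos hν.1 hθ
  have hconn' := exp_mul_legendreP_cos_sub_legendreP_neg_cos (ν := -ν - 1)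
    (by simp; linarith [hν.2]) hθ
  have hexp' : Complex.exp ((-ν - 1) * π * I) = -Complex.exp (-(ν * π) * I) := by
    rw [show (-ν - 1) * π * I = -(ν * π) * I - π * I by ring, Complex.exp_sub_pi_mul_I]
  have hsin' : Complex.sin ((-ν - 1) * π) = Complex.sin (ν * π) := by
    rw [show (-ν - 1) * π = -(ν * π + π) by ring, Complex.sin_neg, Complex.sin_add_pi, neg_neg]
  rw [legendreP_neg_sub_one, legendreP_neg_sub_one, hexp', hsin'] at hconn'
  have hexp := exp_mul_I_sub_exp_neg_mul_I (ν * π)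
  have hinv : Complex.exp (ν * π * I) * Complex.exp (-(ν * π) * I) = 1 := by
    rw [← Complex.exp_add]; simp
  have hmul := congrArg₂ (· * ·) hconn hconn'
  beta_reduce at hmul
  rw [legendreForm, ← eulerBoundary_mul_eulerBoundary]
  linear_combination -hmul - (π : ℂ) ^ 2 * legendreP ν (Real.cos θ) ^ 2 * hinv -
    (π : ℂ) ^ 2 * legendreP ν (Real.cos θ) * legendreP ν (-Real.cos θ) * hexp

end Connection

section Bounds

theorem norm_complex_cos_le_exp_norm (z : ℂ) : ‖Complex.cos z‖ ≤ Real.exp ‖z‖ := by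
  have hexp (w : ℂ) (hw : ‖w‖ = 1) : ‖Complex.exp (z * w)‖ ≤ Real.exp ‖z‖ := by
    simpa [hw] using Complex.norm_exp_le_exp_norm (z * w)
  calc ‖Complex.cos z‖ = ‖Complex.exp (z * I) + Complex.exp (z * -I)‖ / 2 := by
        rw [Complex.cos, norm_div, Complex.norm_two, neg_mul, mul_neg]
    _ ≤ (Real.exp ‖z‖ + Real.exp ‖z‖) / 2 := by
        gcongr
        exact norm_add_le_of_le (hexp I Complex.norm_I) (hexp (-I) (by simp))
    _ = Real.exp ‖z‖ := add_self_div_two _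

theorem norm_cos_mul_mehlerKernel_le (ν : ℂ) {θ β : ℝ} (hβ : β ∈ Set.Icc 0 π) :
    ‖Complex.cos ((ν + 1 / 2) * β) * mehlerKernel θ β‖ ≤
      Real.exp (‖ν + 1 / 2‖ * π) * mehlerKernel θ β := by
  rw [norm_mul, Complex.norm_real, Real.norm_of_nonneg (mehlerKernel_nonneg θ β)]
  gcongr
  · exact mehlerKernel_nonneg θ β
  · refine (norm_complex_cos_le_exp_norm _).trans (Real.exp_le_exp.2 ?_)
    rw [norm_mul, Complex.norm_real, Real.norm_of_nonneg hβ.1]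
    gcongr
    exact hβ.2

theorem integrableOn_Ioo_zero_mehlerKernel {θ : ℝ} (hθ : θ ∈ Set.Ioo 0 π) :
    IntegrableOn (mehlerKernel θ) (Set.Ioo 0 θ) :=
  (integrableOn_mehlerKernel hθ).mono_set (Set.Ioo_subset_Ioo_left (by linarith [hθ.1]))

theorem norm_legendreP_cos_le (ν : ℂ) {θ : ℝ} (hθ : θ ∈ Set.Ioo 0 π) :
    ‖legendreP ν (Real.cos θ)‖ ≤
      Real.exp (‖ν + 1 / 2‖ * π) * ‖legendreP (-1 / 2) (Real.cos θ)‖ := by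
  have hhalf : legendreP (-1 / 2) (Real.cos θ) =
      (2 / π * ∫ β in Set.Ioo 0 θ, mehlerKernel θ β : ℝ) := by
    rw [legendreP_cos _ hθ]
    push_cast [← integral_complex_ofReal]
    norm_num
  have hint : 0 ≤ ∫ β in Set.Ioo 0 θ, mehlerKernel θ β :=
    setIntegral_nonneg measurableSet_Ioo fun β _ => mehlerKernel_nonneg θ β
  have hle := norm_integral_le_of_norm_le
    ((integrableOn_Ioo_zero_mehlerKernel hθ).const_mul (Real.exp (‖ν + 1 / 2‖ * π)))
    ((ae_restrict_mem measurableSet_Ioo).mono fun β hβ =>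
      norm_cos_mul_mehlerKernel_le ν ⟨hβ.1.le, (hβ.2.trans hθ.2).le⟩)
  rw [MeasureTheory.integral_const_mul] at hle
  rw [hhalf, Complex.norm_real, Real.norm_of_nonneg (by positivity), legendreP_cos ν hθ, norm_mul,
    mul_left_comm]
  gcongr
  simp [abs_of_pos Real.pi_pos]

theorem norm_eulerBoundary_neg_half (θ : ℝ) :
    ‖eulerBoundary (-1 / 2) θ‖ = ‖eulerIntegral (-1 / 2) (Complex.exp ((2 * θ : ℝ) * I))‖ := by
  have hexp := Complex.norm_exp_ofReal_mul_I ((-1 / 2 + 1) * θ)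
  push_cast at hexp
  rw [eulerBoundary, norm_mul, hexp, one_mul]

theorem exists_norm_legendreP_neg_half_cos_le : ∃ C, 0 ≤ C ∧ ∀ θ ∈ Set.Ioo 0 π,
    ‖legendreP (-1 / 2) (Real.cos θ)‖ ≤ C * Real.sin θ ^ (-1 / 4 : ℝ) := by
  have hν : -1 < (-1 / 2 : ℂ).re := by norm_num
  obtain ⟨C, hC, hbound⟩ := exists_norm_eulerIntegral_le hν
  refine ⟨2 * (C * 2 ^ (-1 / 4 : ℝ)) / π, by positivity, fun θ hθ => ?_⟩
  have hsin : 0 < Real.sin θ := Real.sin_pos_of_mem_Ioo hθ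
  have hedge (φ : ℝ) (hφ : |Real.sin φ| = Real.sin θ) :
      ‖eulerBoundary (-1 / 2) φ‖ ≤ C * 2 ^ (-1 / 4 : ℝ) * Real.sin θ ^ (-1 / 4 : ℝ) := by
    have hcancel : 2 * φ / 2 = φ := mul_div_cancel_left₀ φ two_ne_zero
    have hle := hbound _ (Complex.norm_exp_ofReal_mul_I (2 * φ)).le
      (exp_ofReal_mul_I_ne_one (by rw [hcancel, ← abs_pos, hφ]; exact hsin))
    rwa [norm_one_sub_exp_ofReal_mul_I, hcancel, hφ, Real.mul_rpow zero_le_two hsin.le,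
      ← norm_eulerBoundary_neg_half, ← mul_assoc] at hle
  have hnorm : π * ‖legendreP (-1 / 2) (Real.cos θ)‖ =
      ‖eulerBoundary (-1 / 2) θ - eulerBoundary (-1 / 2) (-θ)‖ := by
    rw [← I_mul_pi_mul_legendreP_cos hν hθ, norm_mul, norm_mul, Complex.norm_I, one_mul,
      Complex.norm_real, Real.norm_of_nonneg Real.pi_pos.le]
  have hle := norm_sub_le_of_le (hedge θ (abs_of_pos hsin))
    (hedge (-θ) (by rw [Real.sin_neg, abs_neg, abs_of_pos hsin]))
  rw [← hnorm, mul_comm, ← le_div_iff₀ Real.pi_pos] at hle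
  exact hle.trans_eq (by ring)

theorem arccos_mem_Ioo {x : ℝ} (hx : x ∈ Set.Ioo (-1 : ℝ) 1) : Real.arccos x ∈ Set.Ioo 0 π :=
  ⟨Real.arccos_pos.2 hx.2, Real.arccos_lt_pi.2 hx.1⟩

theorem exists_norm_legendreP_le : ∃ C, 0 ≤ C ∧ ∀ ν : ℂ, ∀ x ∈ Set.Ioo (-1 : ℝ) 1,
    ‖legendreP ν x‖ ≤ C * Real.exp (‖ν + 1 / 2‖ * π) * (1 - x ^ 2) ^ (-1 / 8 : ℝ) := by
  obtain ⟨C, hC, hbound⟩ := exists_norm_legendreP_neg_half_cos_le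
  refine ⟨C, hC, fun ν x hx => ?_⟩
  have harccos := arccos_mem_Ioo hx
  have hpos : 0 < 1 - x ^ 2 := by nlinarith [hx.1, hx.2]
  have hsin : Real.sin (Real.arccos x) ^ (-1 / 4 : ℝ) = (1 - x ^ 2) ^ (-1 / 8 : ℝ) := by
    rw [Real.sin_arccos, Real.sqrt_eq_rpow, ← Real.rpow_mul hpos.le]
    norm_num
  have hcos : Real.cos (Real.arccos x) = x := Real.cos_arccos hx.1.le hx.2.le
  have hle := (norm_legendreP_cos_le ν harccos).trans
    (mul_le_mul_of_nonneg_left (hbound _ harccos) (Real.exp_pos _).le)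
  rw [hsin, hcos] at hle
  exact hle.trans_eq (by ring)

end Bounds

section Regularity

theorem differentiable_legendreP {x : ℝ} (hx : x ∈ Set.Ioo (-1 : ℝ) 1) :
    Differentiable ℂ fun ν => legendreP ν x := by
  intro ν
  have hθ := arccos_mem_Ioo hx
  have hcos : Real.cos (Real.arccos x) = x := Real.cos_arccos hx.1.le hx.2.le
  generalize Real.arccos x = θ at hθ hcos
  subst hcos
  simp only [legendreP_cos _ hθ]
  refine DifferentiableAt.const_mul (differentiableAt_integral_of_dominated
    (s := Metric.ball ν 1) (Metric.ball_mem_nhds ν one_pos)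
    (bound := fun β => Real.exp ((‖ν + 1 / 2‖ + 1) * π) * mehlerKernel θ β) ?_ ?_ ?_
    ((integrableOn_Ioo_zero_mehlerKernel hθ).const_mul _)) _
  · intro z _
    exact Measurable.aestronglyMeasurable (by fun_prop)
  · exact .of_forall fun β => Differentiable.differentiableOn (by fun_prop)
  · filter_upwards [ae_restrict_mem measurableSet_Ioo] with β hβ z hz
    refine (norm_cos_mul_mehlerKernel_le z ⟨hβ.1.le, (hβ.2.trans hθ.2).le⟩).trans ?_
    gcongr
    · exact mehlerKernel_nonneg θ β
    · rw [show z + 1 / 2 = (ν + 1 / 2) + (z - ν) by ring]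
      exact norm_add_le_of_le le_rfl (mem_ball_iff_norm.1 hz).le

theorem measurable_legendreP (ν : ℂ) : Measurable (legendreP ν) := by
  have hintegral : StronglyMeasurable fun x : ℝ => ∫ β in (0 : ℝ)..Real.arccos x,
      Complex.cos ((2 * ν + 1) * β / 2) / (√(2 * (Real.cos β - x)) : ℝ) := by
    have hind (x : ℝ) : ∫ β in (0 : ℝ)..Real.arccos x,
        Complex.cos ((2 * ν + 1) * β / 2) / (√(2 * (Real.cos β - x)) : ℝ) =
        ∫ β, {p : ℝ × ℝ | p.2 ∈ Set.Ioc 0 (Real.arccos p.1)}.indicator (fun p =>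
          Complex.cos ((2 * ν + 1) * p.2 / 2) / (√(2 * (Real.cos p.2 - p.1)) : ℝ)) (x, β) := by
      rw [integral_of_le (Real.arccos_nonneg x),
        ← MeasureTheory.integral_indicator measurableSet_Ioc]
      rfl
    simp only [hind]
    refine StronglyMeasurable.integral_prod_right' (Measurable.stronglyMeasurable
      (Measurable.indicator (by fun_prop) ?_))
    exact (measurableSet_lt measurable_const measurable_snd).inter
      (measurableSet_le measurable_snd (Real.measurable_arccos.comp measurable_fst))
  exact Measurable.ite (measurableSet_singleton 1) measurable_const
    (hintegral.measurable.const_mul _)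

end Regularity

/-- The quartic integrands `x P_ν(x)^i P_ν(-x)^j`, with `i + j = 4`, which arise from squaring
`legendreForm`. -/
noncomputable def legendreMonomial (ν : ℂ) (i j : ℕ) (x : ℝ) : ℂ :=
  x * legendreP ν x ^ i * legendreP ν (-x) ^ j

section QuarticIntegrals

variable {ν : ℂ} {i j : ℕ}

theorem exists_norm_legendreMonomial_le : ∃ C, 0 ≤ C ∧ ∀ ν : ℂ, ∀ i j : ℕ, i + j = 4 →
    ∀ x ∈ Set.Ioo (-1 : ℝ) 1, ‖legendreMonomial ν i j x‖ ≤
      C * Real.exp (4 * (‖ν + 1 / 2‖ * π)) * √(1 - x ^ 2)⁻¹ := by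
  obtain ⟨C, hC, hbound⟩ := exists_norm_legendreP_le
  refine ⟨C ^ 4, by positivity, fun ν i j hij x hx => ?_⟩
  set b := C * Real.exp (‖ν + 1 / 2‖ * π) * (1 - x ^ 2) ^ (-1 / 8 : ℝ) with hb
  have hpos : 0 < 1 - x ^ 2 := by nlinarith [hx.1, hx.2]
  have hx1 : ‖(x : ℂ)‖ ≤ 1 := by
    rw [Complex.norm_real, Real.norm_eq_abs]
    exact (abs_lt.2 hx).le
  have hpos_le : ‖legendreP ν x‖ ≤ b := hbound ν x hx
  have hneg_le : ‖legendreP ν (-x)‖ ≤ b := by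
    simpa only [neg_sq] using hbound ν (-x) ⟨neg_lt_neg hx.2, neg_lt.1 hx.1⟩
  have hsqrt : ((1 - x ^ 2) ^ (-1 / 8 : ℝ)) ^ 4 = √(1 - x ^ 2)⁻¹ := by
    rw [Real.sqrt_eq_rpow, ← Real.rpow_mul_natCast hpos.le, Real.inv_rpow hpos.le,
      ← Real.rpow_neg hpos.le]
    norm_num
  calc ‖legendreMonomial ν i j x‖
      = ‖(x : ℂ)‖ * ‖legendreP ν x‖ ^ i * ‖legendreP ν (-x)‖ ^ j := by
        rw [legendreMonomial, norm_mul, norm_mul, norm_pow, norm_pow]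
    _ ≤ 1 * b ^ i * b ^ j := by gcongr
    _ = b ^ 4 := by rw [one_mul, ← pow_add, hij]
    _ = C ^ 4 * Real.exp (4 * (‖ν + 1 / 2‖ * π)) * √(1 - x ^ 2)⁻¹ := by
        rw [hb, mul_pow, mul_pow, hsqrt, ← Real.exp_nat_mul, Nat.cast_ofNat]

theorem measurable_legendreMonomial (ν : ℂ) (i j : ℕ) : Measurable (legendreMonomial ν i j) := by
  have hP := measurable_legendreP ν
  unfold legendreMonomial
  fun_prop

theorem integrableOn_sqrt_one_sub_sq_inv :
    IntegrableOn (fun x : ℝ => √(1 - x ^ 2)⁻¹) (Set.Ioo (-1) 1) :=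
  (intervalIntegrable_iff_integrableOn_Ioo_of_le (by norm_num)).1
    Polynomial.Chebyshev.intervalIntegrable_sqrt_one_sub_sq_inv

theorem intervalIntegrable_legendreMonomial (ν : ℂ) (hij : i + j = 4) :
    IntervalIntegrable (legendreMonomial ν i j) volume (-1) 1 := by
  obtain ⟨C, -, hbound⟩ := exists_norm_legendreMonomial_le
  rw [intervalIntegrable_iff_integrableOn_Ioo_of_le (by norm_num)]
  exact (integrableOn_sqrt_one_sub_sq_inv.const_mul _).mono'
    (measurable_legendreMonomial ν i j).aestronglyMeasurable
    ((ae_restrict_mem measurableSet_Ioo).mono (hbound ν i j hij))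

theorem integral_legendreMonomial_swap (ν : ℂ) (i j : ℕ) :
    ∫ x in (-1 : ℝ)..1, legendreMonomial ν j i x =
      -∫ x in (-1 : ℝ)..1, legendreMonomial ν i j x := by
  have hreflect := intervalIntegral.integral_comp_neg (a := -1) (b := 1) (legendreMonomial ν i j)
  rw [neg_neg] at hreflect
  rw [← hreflect, ← intervalIntegral.integral_neg]
  refine intervalIntegral.integral_congr fun x _ => ?_
  simp only [legendreMonomial, neg_neg]
  push_cast
  ring

theorem mul_legendreForm_sq (ν : ℂ) (x : ℝ) :
    x * legendreForm ν x ^ 2 = legendreMonomial ν 4 0 x + legendreMonomial ν 0 4 x +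
      (-2 - 4 * Complex.sin (ν * π) ^ 2) * legendreMonomial ν 2 2 x +
      4 * I * Complex.sin (ν * π) * (legendreMonomial ν 3 1 x - legendreMonomial ν 1 3 x) := by
  simp only [legendreForm, legendreMonomial]
  linear_combination 4 * x * Complex.sin (ν * π) ^ 2 * legendreP ν x ^ 2 *
    legendreP ν (-x) ^ 2 * Complex.I_sq

theorem integral_mul_legendreForm_sq (ν : ℂ) :
    ∫ x in (-1 : ℝ)..1, x * legendreForm ν x ^ 2 =
      8 * I * Complex.sin (ν * π) * ∫ x in (-1 : ℝ)..1, legendreMonomial ν 3 1 x := by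
  have h40 : IntervalIntegrable (legendreMonomial ν 4 0) volume (-1) 1 :=
    intervalIntegrable_legendreMonomial ν rfl
  have h04 : IntervalIntegrable (legendreMonomial ν 0 4) volume (-1) 1 :=
    intervalIntegrable_legendreMonomial ν rfl
  have h31 : IntervalIntegrable (legendreMonomial ν 3 1) volume (-1) 1 :=
    intervalIntegrable_legendreMonomial ν rfl
  have h13 : IntervalIntegrable (legendreMonomial ν 1 3) volume (-1) 1 :=
    intervalIntegrable_legendreMonomial ν rfl
  have h22 := (intervalIntegrable_legendreMonomial (i := 2) (j := 2) ν rfl).const_mul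
    (-2 - 4 * Complex.sin (ν * π) ^ 2)
  simp only [mul_legendreForm_sq]
  rw [intervalIntegral.integral_add ((h40.add h04).add h22) ((h31.sub h13).const_mul _),
    intervalIntegral.integral_add (h40.add h04) h22, intervalIntegral.integral_add h40 h04,
    intervalIntegral.integral_const_mul, intervalIntegral.integral_const_mul,
    intervalIntegral.integral_sub h31 h13, integral_legendreMonomial_swap ν 4 0,
    integral_legendreMonomial_swap ν 3 1]
  have h22_zero := self_eq_neg.1 (integral_legendreMonomial_swap ν 2 2)
  linear_combination (-2 - 4 * Complex.sin (ν * π) ^ 2) * h22_zero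

end QuarticIntegrals

section CircleMean

variable {ν : ℂ}

theorem integral_comp_exp_two_mul {E : Type*} [NormedAddCommGroup E] [NormedSpace ℝ E]
    (F : ℂ → E) :
    ∫ θ in (0 : ℝ)..π, F (Complex.exp ((2 * θ : ℝ) * I)) = π • circleAverage F 0 1 := by
  rw [intervalIntegral.integral_comp_mul_left (fun φ : ℝ => F (Complex.exp (φ * I))) two_ne_zero,
    Real.circleAverage_def, smul_smul, mul_zero, mul_inv, mul_left_comm,
    mul_inv_cancel₀ Real.pi_ne_zero, mul_one]
  simp only [circleMap_zero, Complex.ofReal_one, one_mul]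

theorem exists_norm_eulerProduct_le (hν : ν.re ∈ Set.Ioo (-1) 0) :
    ∃ C, ∀ z : ℂ, ‖z‖ ≤ 1 → z ≠ 1 → ‖eulerProduct ν z‖ ≤ C * ‖1 - z‖ ^ (-1 / 2 : ℝ) := by
  obtain ⟨C, hC, hbound⟩ := exists_norm_eulerIntegral_le hν.1
  obtain ⟨C', -, hbound'⟩ := exists_norm_eulerIntegral_le (ν := -ν - 1)
    (by simpa using hν.2)
  refine ⟨C * C', fun z hz hz1 => ?_⟩
  have hpos : 0 < ‖1 - z‖ := norm_pos_iff.2 (sub_ne_zero.2 hz1.symm)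
  calc ‖eulerProduct ν z‖ = ‖eulerIntegral ν z‖ * ‖eulerIntegral (-ν - 1) z‖ := norm_mul _ _
    _ ≤ C * ‖1 - z‖ ^ (-1 / 4 : ℝ) * (C' * ‖1 - z‖ ^ (-1 / 4 : ℝ)) := by
        gcongr
        exacts [hbound z hz hz1, hbound' z hz hz1]
    _ = C * C' * ‖1 - z‖ ^ (-1 / 2 : ℝ) := by
        rw [mul_mul_mul_comm, ← Real.rpow_add hpos]
        norm_num

theorem exists_norm_sq_sub_one_mul_eulerProduct_sq_le (hν : ν.re ∈ Set.Ioo (-1) 0) :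
    ∃ C, ∀ z ∈ Metric.ball (0 : ℂ) 1, ‖(z ^ 2 - 1) * eulerProduct ν z ^ 2‖ ≤ C := by
  obtain ⟨C, hbound⟩ := exists_norm_eulerProduct_le hν
  refine ⟨2 * C ^ 2, fun z hz => ?_⟩
  have hz1 : ‖z‖ < 1 := mem_ball_zero_iff.1 hz
  have hne : z ≠ 1 := fun h => by simp [h] at hz1
  have hpos : 0 < ‖1 - z‖ := norm_pos_iff.2 (sub_ne_zero.2 hne.symm)
  have hfactor : ‖z ^ 2 - 1‖ ≤ 2 * ‖1 - z‖ := by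
    rw [show z ^ 2 - 1 = (-1 + -z) * (1 - z) by ring, norm_mul]
    gcongr
    refine (norm_add_le _ _).trans ?_
    rw [norm_neg, norm_neg, norm_one]
    linarith
  calc ‖(z ^ 2 - 1) * eulerProduct ν z ^ 2‖ = ‖z ^ 2 - 1‖ * ‖eulerProduct ν z‖ ^ 2 := by
        rw [norm_mul, norm_pow]
    _ ≤ 2 * ‖1 - z‖ * (C * ‖1 - z‖ ^ (-1 / 2 : ℝ)) ^ 2 := by
        gcongr
        exact hbound z hz1.le hne
    _ = 2 * C ^ 2 * (‖1 - z‖ * (‖1 - z‖ ^ (-1 / 2 : ℝ)) ^ 2) := by ring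
    _ = 2 * C ^ 2 := by
        rw [← Real.rpow_mul_natCast hpos.le]
        norm_num [Real.rpow_neg_one, hpos.ne']

theorem circleAverage_sq_sub_one_mul_eulerProduct_sq (hν : ν.re ∈ Set.Ioo (-1) 0) :
    circleAverage (fun z => (z ^ 2 - 1) * eulerProduct ν z ^ 2) 0 1 = -eulerProduct ν 0 ^ 2 := by
  have hν' : -1 < (-ν - 1).re := by simpa using hν.2
  obtain ⟨C, hbound⟩ := exists_norm_sq_sub_one_mul_eulerProduct_sq_le hν
  rw [circleAverage_eq_of_bounded_of_continuousWithinAt_off_countable one_pos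
    (Set.countable_singleton 1) ?_ ?_ hbound]
  · ring
  · have hdiff : DifferentiableOn ℂ (eulerProduct ν) (Metric.ball 0 1) :=
      (differentiableOn_eulerIntegral hν.1).mul (differentiableOn_eulerIntegral hν')
    fun_prop
  · rintro z ⟨hz, hz1⟩
    rw [mem_sphere_zero_iff_norm] at hz
    have hcont : ContinuousWithinAt (eulerProduct ν) (Metric.ball 0 1) z :=
      (continuousWithinAt_eulerIntegral hν.1 hz.le hz1).mul
        (continuousWithinAt_eulerIntegral hν' hz.le hz1)
    fun_prop

theorem exp_two_mul_sq_sub_one (θ : ℝ) : Complex.exp ((2 * θ : ℝ) * I) ^ 2 - 1 =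
    4 * I * Complex.exp (θ * I) ^ 2 * (Real.sin θ * Real.cos θ) := by
  have hsq : Complex.exp ((2 * θ : ℝ) * I) = Complex.exp (θ * I) ^ 2 := by
    rw [← Complex.exp_nat_mul]
    push_cast
    ring_nf
  have hinv : Complex.exp (θ * I) * Complex.exp (-θ * I) = 1 := by
    rw [← Complex.exp_add]; simp
  rw [hsq, Complex.ofReal_sin, Complex.ofReal_cos, Complex.sin, Complex.cos]
  linear_combination (Complex.exp (θ * I) ^ 4 - Complex.exp (θ * I) ^ 2 *
    Complex.exp (-θ * I) ^ 2) * Complex.I_sq +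
    (1 + Complex.exp (θ * I) * Complex.exp (-θ * I)) * hinv

theorem pi_pow_four_mul_sin_mul_cos_mul_legendreForm_sq (hν : ν.re ∈ Set.Ioo (-1) 0) {θ : ℝ}
    (hθ : θ ∈ Set.Ioo 0 π) :
    π ^ 4 * (Real.sin θ * (Real.cos θ * legendreForm ν (Real.cos θ) ^ 2)) =
      -(4 * I * Complex.sin (ν * π) ^ 4) * ((Complex.exp ((2 * θ : ℝ) * I) ^ 2 - 1) *
        eulerProduct ν (Complex.exp ((2 * θ : ℝ) * I)) ^ 2) := by
  have hsq := congrArg (· ^ 2) (pi_sq_mul_legendreForm_cos hν hθ)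
  beta_reduce at hsq
  rw [exp_two_mul_sq_sub_one]
  linear_combination (Real.sin θ * Real.cos θ : ℂ) * hsq +
    16 * Complex.sin (ν * π) ^ 4 * Complex.exp (θ * I) ^ 2 * (Real.sin θ * Real.cos θ) *
      eulerProduct ν (Complex.exp ((2 * θ : ℝ) * I)) ^ 2 * Complex.I_sq

theorem pi_pow_four_mul_integral_mul_legendreForm_sq (hν : ν.re ∈ Set.Ioo (-1) 0) :
    π ^ 4 * ∫ x in (-1 : ℝ)..1, x * legendreForm ν x ^ 2 =
      4 * I * π * Complex.sin (ν * π) ^ 4 * eulerProduct ν 0 ^ 2 := by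
  have hcircle := integral_comp_exp_two_mul fun z => (z ^ 2 - 1) * eulerProduct ν z ^ 2
  rw [circleAverage_sq_sub_one_mul_eulerProduct_sq hν, Complex.real_smul] at hcircle
  have hcongr : ∫ θ in (0 : ℝ)..π,
      π ^ 4 * (Real.sin θ • (Real.cos θ * legendreForm ν (Real.cos θ) ^ 2)) =
      ∫ θ in (0 : ℝ)..π, -(4 * I * Complex.sin (ν * π) ^ 4) *
        ((Complex.exp ((2 * θ : ℝ) * I) ^ 2 - 1) *
          eulerProduct ν (Complex.exp ((2 * θ : ℝ) * I)) ^ 2) := by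
    rw [integral_of_le Real.pi_pos.le, integral_of_le Real.pi_pos.le, integral_Ioc_eq_integral_Ioo,
      integral_Ioc_eq_integral_Ioo]
    refine setIntegral_congr_fun measurableSet_Ioo fun θ hθ => ?_
    rw [Complex.real_smul]
    exact pi_pow_four_mul_sin_mul_cos_mul_legendreForm_sq hν hθ
  rw [integral_neg_one_one_eq_integral_sin_smul_comp_cos, ← intervalIntegral.integral_const_mul,
    hcongr, intervalIntegral.integral_const_mul, hcircle]
  ring

end CircleMean

section Evaluation

variable {ν : ℂ}

theorem integral_legendreMonomial_three_one_mul_of_re_mem_Ioo (hν : ν.re ∈ Set.Ioo (-1) 0) :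
    (∫ x in (-1 : ℝ)..1, legendreMonomial ν 3 1 x) * ((2 * ν + 1) ^ 2 * π) =
      Complex.sin (2 * ν * π) * Complex.cos (ν * π) := by
  have hsin := sin_mul_pi_ne_zero_of_re_mem_Ioo hν
  have hpi : (π : ℂ) ≠ 0 := Complex.ofReal_ne_zero.2 Real.pi_ne_zero
  have hmean := pi_pow_four_mul_integral_mul_legendreForm_sq hν
  have hvalue := congrArg (· ^ 2) (eulerIntegral_zero_mul_eulerIntegral_zero hν)
  rw [integral_mul_legendreForm_sq] at hmean
  rw [← eulerProduct] at hvalue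
  have hfactor : 8 * I * Complex.sin (ν * π) * π ^ 3 ≠ 0 :=
    mul_ne_zero (mul_ne_zero (mul_ne_zero (by norm_num) Complex.I_ne_zero) hsin)
      (pow_ne_zero 3 hpi)
  rw [show 2 * ν * π = 2 * (ν * π) by ring, Complex.sin_two_mul]
  apply mul_left_cancel₀ hfactor
  linear_combination (2 * ν + 1) ^ 2 * hmean + 4 * I * π * Complex.sin (ν * π) ^ 2 * hvalue

theorem differentiable_integral_legendreMonomial {i j : ℕ} (hij : i + j = 4) :
    Differentiable ℂ fun ν => ∫ x in (-1 : ℝ)..1, legendreMonomial ν i j x := by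
  intro ν
  obtain ⟨C, hC, hbound⟩ := exists_norm_legendreMonomial_le
  simp only [integral_of_le (by norm_num : (-1 : ℝ) ≤ 1), integral_Ioc_eq_integral_Ioo]
  refine differentiableAt_integral_of_dominated (Metric.ball_mem_nhds ν one_pos)
    (bound := fun x => C * Real.exp (4 * ((‖ν + 1 / 2‖ + 1) * π)) * √(1 - x ^ 2)⁻¹)
    (fun z _ => (measurable_legendreMonomial z i j).aestronglyMeasurable) ?_ ?_
    (integrableOn_sqrt_one_sub_sq_inv.const_mul _)
  · filter_upwards [ae_restrict_mem measurableSet_Ioo] with x hx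
    have hdiff := differentiable_legendreP hx
    have hdiff_neg := differentiable_legendreP (x := -x) ⟨neg_lt_neg hx.2, neg_lt.1 hx.1⟩
    unfold legendreMonomial
    exact Differentiable.differentiableOn (by fun_prop)
  · filter_upwards [ae_restrict_mem measurableSet_Ioo] with x hx z hz
    refine (hbound z i j hij x hx).trans ?_
    gcongr
    rw [show z + 1 / 2 = (ν + 1 / 2) + (z - ν) by ring]
    exact norm_add_le_of_le le_rfl (mem_ball_iff_norm.1 hz).le

theorem integral_legendreMonomial_three_one_mul (ν : ℂ) :
    (∫ x in (-1 : ℝ)..1, legendreMonomial ν 3 1 x) * ((2 * ν + 1) ^ 2 * π) =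
      Complex.sin (2 * ν * π) * Complex.cos (ν * π) := by
  have hdiff := differentiable_integral_legendreMonomial (i := 3) (j := 1) rfl
  have hlhs : Differentiable ℂ fun ν : ℂ =>
      (∫ x in (-1 : ℝ)..1, legendreMonomial ν 3 1 x) * ((2 * ν + 1) ^ 2 * π) := by fun_prop
  have hrhs : Differentiable ℂ fun ν : ℂ => Complex.sin (2 * ν * π) * Complex.cos (ν * π) := by
    fun_prop
  have hstrip : ∀ᶠ ν : ℂ in 𝓝 (-1 / 2), ν.re ∈ Set.Ioo (-1) 0 :=
    (isOpen_Ioo.preimage Complex.continuous_re).mem_nhds (by norm_num)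
  exact congrFun (AnalyticOnNhd.eq_of_eventuallyEq (fun z _ => hlhs.analyticAt z)
    (fun z _ => hrhs.analyticAt z)
    (hstrip.mono fun _ => integral_legendreMonomial_three_one_mul_of_re_mem_Ioo)) ν

end Evaluation

theorem stmt_18 (ν : ℂ) (hν : ν ≠ -1/2) :
    (∫ x in (-1:ℝ)..1, (x:ℂ) * (legendreP ν x)^3 * legendreP ν (-x))
      = Complex.sin (2 * ν * (π:ℂ)) * Complex.cos (ν * (π:ℂ)) / ((2*ν+1)^2 * (π:ℂ)) := by
  have hne : 2 * ν + 1 ≠ 0 := fun h => hν (by linear_combination h / 2)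
  have hpi : (π : ℂ) ≠ 0 := Complex.ofReal_ne_zero.2 Real.pi_ne_zero
  rw [eq_div_iff (mul_ne_zero (pow_ne_zero 2 hne) hpi)]
  simpa only [legendreMonomial, pow_one] using integral_legendreMonomial_three_one_mul ν
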